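/- arXiv:2005.10032 — 2 statements merged into one kernel-verified Lean document; each statement's English description precedes it below -/
import Mathlib

section
/- Let p ∈ (1,∞) and n ≥ 3 be an integer, and let ν be a positive integer. If u : 𝐁_{ℓ₂ⁿ} → 𝐁_{ℓ_p^ν} is a harmonic function (each component is harmonic on the real Euclidean unit ball), then for every x ∈ 𝐁_{ℓ₂ⁿ}, |∇‖u(x)‖_p| ≤ (c_n/(1−‖x‖₂²)) · ∫_{−1}^{1} |t − ((n−2)/n)‖x‖₂| (1−t²)^{(n−3)/2} / (1 − 2t‖x‖₂ + ‖x‖₂²)^{(n−2)/2} dt, where c_n = 2Γ((n+2)/2)/(Γ(1/2)Γ((n−1)/2)). -/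
open scoped BigOperators Topology
open Filter

/-- The `p`-norm `(∑ |x j|^p)^(1/p)` on `ℝ^ν` for a real exponent `p`. -/
noncomputable def pnormR {ν : ℕ} (p : ℝ) (x : Fin ν → ℝ) : ℝ :=
  (∑ j, |x j| ^ p) ^ (1 / p)

/-- `|∇‖u(x)‖_p| = limsup_{y → x} |‖u(y)‖_p - ‖u(x)‖_p| / ‖y - x‖₂`. -/
noncomputable def gradPnormR {n ν : ℕ} (p : ℝ)
    (u : EuclideanSpace ℝ (Fin n) → (Fin ν → ℝ)) (x : EuclideanSpace ℝ (Fin n)) : ℝ :=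
  Filter.limsup (fun y => |pnormR p (u y) - pnormR p (u x)| / ‖y - x‖) (𝓝[≠] x)

/-- A real-valued function is harmonic on the Euclidean unit ball:
it is `C²` there and its Laplacian vanishes. -/
def HarmonicOnUnitBall {n : ℕ} (v : EuclideanSpace ℝ (Fin n) → ℝ) : Prop :=
  ContDiffOn ℝ 2 v (Metric.ball 0 1) ∧
  ∀ x ∈ Metric.ball (0 : EuclideanSpace ℝ (Fin n)) 1,
    ∑ i, fderiv ℝ (fun y => fderiv ℝ v y (EuclideanSpace.single i 1)) x
      (EuclideanSpace.single i 1) = 0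

/-!
By Hahn–Banach duality it suffices to bound the derivative at `x`, in a unit direction `ℓ`, of a
real harmonic function bounded by one. A Kelvin transform for an inversion that preserves the unit
sphere and exchanges `0` and `x` turns this derivative into a combination of the value and the
derivative at `0` of a harmonic function dominated by a power of the quadratic
`1 - 2 ⟪x, y⟫ + ‖x‖ ^ 2 ‖y‖ ^ 2`. The mean value property expresses that combination, for any
radial weight, as an integral against a kernel linear in `ℓ`.

The integral of the absolute value of this kernel against the dominating power depends only on the
components of `y` along `x` and along the part of `ℓ` orthogonal to `x`, so it reduces to weighted
integrals over a disc. The disc is swept out by a pencil of circles on each of which the weight is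
constant. On each circle the integral over `φ` of `|a s + b (s cos φ + s' sin φ)|`, where
`s ^ 2 + s' ^ 2 = 1`, equals that of `|a s + b cos φ|` by rotation; the latter is convex and even
in `s`, hence largest for `s = 1`. So the radial direction is the worst one, and letting the radial
weight concentrate on the unit sphere gives the sharp constant.
-/

open InnerProductSpace EuclideanGeometry MeasureTheory Set Module
open scoped Laplacian RealInnerProductSpace Gradient

section Laplacian

variable {E F : Type*} [NormedAddCommGroup E] [InnerProductSpace ℝ E]
  [NormedAddCommGroup F] [NormedSpace ℝ F] {f : E → F} {x : E}

lemma eventually_hasFDerivAt_of_contDiffAt_two (hf : ContDiffAt ℝ 2 f x) :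
    ∀ᶠ y in 𝓝 x, HasFDerivAt f (fderiv ℝ f y) y :=
  (hf.eventually (by simp)).mono fun _ hy => (hy.differentiableAt (by simp)).hasFDerivAt

lemma hasFDerivAt_fderiv_of_contDiffAt_two (hf : ContDiffAt ℝ 2 f x) :
    HasFDerivAt (fderiv ℝ f) (fderiv ℝ (fderiv ℝ f) x) x :=
  ((hf.fderiv_right (m := 1) (by norm_num)).differentiableAt (by simp)).hasFDerivAt

variable [FiniteDimensional ℝ E] {ι : Type*} [Fintype ι]

lemma laplacian_eq_sum_fderiv_fderiv (b : OrthonormalBasis ι ℝ E) (f : E → F) (x : E) :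
    Δ f x = ∑ i, fderiv ℝ (fderiv ℝ f) x (b i) (b i) := by
  simp [laplacian_eq_iteratedFDeriv_orthonormalBasis f b, iteratedFDeriv_two_apply]

lemma laplacian_eq_sum_of_hasFDerivAt (b : OrthonormalBasis ι ℝ E)
    {f' : E → E →L[ℝ] F} {f'' : E →L[ℝ] E →L[ℝ] F}
    (hf : ∀ᶠ y in 𝓝 x, HasFDerivAt f (f' y) y) (hf' : HasFDerivAt f' f'' x) :
    Δ f x = ∑ i, f'' (b i) (b i) := by
  have hfderiv : fderiv ℝ f =ᶠ[𝓝 x] f' := hf.mono fun _ hy => hy.fderiv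
  rw [laplacian_eq_sum_fderiv_fderiv b, hfderiv.fderiv_eq, hf'.fderiv]

lemma fderiv_apply_gradient_eq_sum (b : OrthonormalBasis ι ℝ E) (φ : E → ℝ) (T : E →L[ℝ] F)
    (x : E) : T (∇ φ x) = ∑ i, fderiv ℝ φ x (b i) • T (b i) := by
  conv_lhs => rw [← b.sum_repr' (∇ φ x)]
  simp only [map_sum, map_smul]
  refine Finset.sum_congr rfl fun i _ => ?_
  rw [real_inner_comm, ← toDual_gradient, toDual_apply_apply]

lemma laplacian_fun_smul {φ : E → ℝ} (hφ : ContDiffAt ℝ 2 φ x) (hf : ContDiffAt ℝ 2 f x) :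
    Δ (fun y => φ y • f y) x = φ x • Δ f x + (2 : ℝ) • fderiv ℝ f x (∇ φ x) + Δ φ x • f x := by
  have hfst : ∀ᶠ y in 𝓝 x, HasFDerivAt (fun y => φ y • f y)
      (φ y • fderiv ℝ f y + (fderiv ℝ φ y).smulRight (f y)) y := by
    filter_upwards [eventually_hasFDerivAt_of_contDiffAt_two hφ,
      eventually_hasFDerivAt_of_contDiffAt_two hf] with y hφy hfy using hφy.smul hfy
  have hsnd := ((hφ.differentiableAt (by simp)).hasFDerivAt.smul
    (hasFDerivAt_fderiv_of_contDiffAt_two hf)).add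
    ((ContinuousLinearMap.smulRightL ℝ E F).hasFDerivAt_of_bilinear
      (hasFDerivAt_fderiv_of_contDiffAt_two hφ) (hf.differentiableAt (by simp)).hasFDerivAt)
  let b := stdOrthonormalBasis ℝ E
  rw [laplacian_eq_sum_of_hasFDerivAt b hfst hsnd, laplacian_eq_sum_fderiv_fderiv b f,
    laplacian_eq_sum_fderiv_fderiv b φ, fderiv_apply_gradient_eq_sum b]
  simp only [ContinuousLinearMap.precompR_apply, ContinuousLinearMap.compL_apply, add_apply,
    smul_apply, ContinuousLinearMap.smulRight_apply, ContinuousLinearMap.comp_apply,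
    ContinuousLinearMap.smulRightL_apply_apply, ContinuousLinearMap.precompL_apply,
    Finset.sum_add_distrib, Finset.smul_sum, two_smul, Finset.sum_smul]
  abel

lemma laplacian_comp_of_fderiv_eq_smul_isometry {I : E → E} {c : ℝ} {L : E ≃ₗᵢ[ℝ] E}
    (hf : ContDiffAt ℝ 2 f (I x)) (hI : ContDiffAt ℝ 2 I x)
    (hL : fderiv ℝ I x = c • (L : E →L[ℝ] E)) :
    Δ (f ∘ I) x = c ^ 2 • Δ f (I x) + fderiv ℝ f (I x) (Δ I x) := by
  have hIx : HasFDerivAt I (fderiv ℝ I x) x := (hI.differentiableAt (by simp)).hasFDerivAt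
  have hfst : ∀ᶠ y in 𝓝 x,
      HasFDerivAt (f ∘ I) ((fderiv ℝ f (I y)).comp (fderiv ℝ I y)) y := by
    filter_upwards [hI.continuousAt.eventually (eventually_hasFDerivAt_of_contDiffAt_two hf),
      eventually_hasFDerivAt_of_contDiffAt_two hI] with y hfy hIy using hfy.comp y hIy
  have hsnd := ((hasFDerivAt_fderiv_of_contDiffAt_two hf).comp x hIx).clm_comp
    (hasFDerivAt_fderiv_of_contDiffAt_two hI)
  let b := stdOrthonormalBasis ℝ E
  rw [laplacian_eq_sum_of_hasFDerivAt b hfst hsnd, laplacian_eq_sum_fderiv_fderiv (b.map L) f,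
    laplacian_eq_sum_fderiv_fderiv b I]
  simp [Finset.sum_add_distrib, Finset.smul_sum, hL, smul_smul, sq, add_comm]

end Laplacian

section Kelvin

variable {E F : Type*} [NormedAddCommGroup E] [InnerProductSpace ℝ E]
  [NormedAddCommGroup F] [NormedSpace ℝ F] {c y : E}

lemma contDiffAt_norm_sub_rpow (s : ℝ) (hy : y ≠ c) :
    ContDiffAt ℝ 2 (fun y => ‖y - c‖ ^ s) y :=
  ((contDiffAt_id.sub contDiffAt_const).norm ℝ (sub_ne_zero.2 hy)).rpow_const_of_ne
    (norm_ne_zero_iff.2 (sub_ne_zero.2 hy))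

lemma hasFDerivAt_norm_sub_rpow (s : ℝ) (hy : y ≠ c) :
    HasFDerivAt (fun y => ‖y - c‖ ^ s) ((s * ‖y - c‖ ^ (s - 2)) • innerSL ℝ (y - c)) y := by
  have hsq := (((hasFDerivAt_id y).sub_const c).norm_sq).rpow_const (p := s / 2)
    (Or.inl (by simpa using sub_ne_zero.2 hy))
  have hpow (r : ℝ) (z : E) : (‖z - c‖ ^ 2) ^ r = ‖z - c‖ ^ (2 * r) :=
    (Real.rpow_natCast_mul (norm_nonneg _) 2 r).symm
  simp only [id, hpow, mul_sub, mul_div_cancel₀ s (two_ne_zero' ℝ), mul_one] at hsq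
  refine hsq.congr_fderiv ?_
  ext w
  simp only [smul_apply, ContinuousLinearMap.comp_apply, ContinuousLinearMap.id_apply, smul_eq_mul]
  ring

lemma inversion_eq_rpow_smul_add (c : E) (R : ℝ) :
    inversion c R = R ^ 2 • (fun y => ‖y - c‖ ^ (-2 : ℝ) • (y - c)) + fun _ => c := by
  ext y
  rw [inversion, vsub_eq_sub, vadd_eq_add, Pi.add_apply, Pi.smul_apply, smul_smul, dist_eq_norm,
    div_pow, div_eq_mul_inv, Real.rpow_neg (norm_nonneg _), Real.rpow_two]

lemma contDiffAt_inversion (R : ℝ) (hy : y ≠ c) : ContDiffAt ℝ 2 (inversion c R) y :=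
  contDiffAt_const.inversion contDiffAt_const contDiffAt_id hy

lemma fderiv_inversion_sub_center (R : ℝ) (hy : y ≠ c) :
    fderiv ℝ (inversion c R) y (y - c) = -((R / ‖y - c‖) ^ 2 • (y - c)) := by
  rw [(hasFDerivAt_inversion hy).fderiv, smul_apply, ← smul_neg]
  simp [Submodule.reflection_orthogonalComplement_singleton_eq_neg, dist_eq_norm]

/-- The Kelvin transform `‖y - c‖ ^ (2 - n) v(y*)` of `v`, where `n` is the dimension of the space
and `y*` the image of `y` under the inversion in the sphere of centre `c` and radius `R`. -/
noncomputable def kelvinTransform (c : E) (R : ℝ) (v : E → F) (y : E) : F :=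
  ‖y - c‖ ^ (2 - finrank ℝ E : ℝ) • v (inversion c R y)

lemma contDiffAt_kelvinTransform {R : ℝ} {v : E → F} (hy : y ≠ c)
    (hv : ContDiffAt ℝ 2 v (inversion c R y)) : ContDiffAt ℝ 2 (kelvinTransform c R v) y :=
  (contDiffAt_norm_sub_rpow _ hy).smul (hv.comp y (contDiffAt_inversion R hy))

lemma fderiv_kelvinTransform {v : E → F} (hy : y ≠ c)
    (hv : DifferentiableAt ℝ v (inversion c R y)) (w : E) :
    fderiv ℝ (kelvinTransform c R v) y w =
      ‖y - c‖ ^ (2 - finrank ℝ E : ℝ) • fderiv ℝ v (inversion c R y)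
          ((R / ‖y - c‖) ^ 2 • (ℝ ∙ (y - c))ᗮ.reflection w)
        + ((2 - finrank ℝ E) * ‖y - c‖ ^ (-finrank ℝ E : ℝ) * ⟪y - c, w⟫)
          • v (inversion c R y) := by
  have hpow : (2 - finrank ℝ E - 2 : ℝ) = -finrank ℝ E := by ring
  have hderiv := (hasFDerivAt_norm_sub_rpow (2 - finrank ℝ E) hy).smul
    (hv.hasFDerivAt.comp y (hasFDerivAt_inversion hy))
  rw [hpow, dist_eq_norm] at hderiv
  rw [show kelvinTransform c R v = (fun z => ‖z - c‖ ^ (2 - finrank ℝ E : ℝ)) • (v ∘ inversion c R)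
    from rfl, hderiv.fderiv]
  simp [-map_sub]

variable [FiniteDimensional ℝ E]

lemma gradient_norm_sub_rpow (s : ℝ) (hy : y ≠ c) :
    ∇ (fun y => ‖y - c‖ ^ s) y = (s * ‖y - c‖ ^ (s - 2)) • (y - c) := by
  refine HasGradientAt.gradient (hasGradientAt_iff_hasFDerivAt.2 ?_)
  refine (hasFDerivAt_norm_sub_rpow s hy).congr_fderiv ?_
  ext w
  simp

lemma laplacian_norm_sub_rpow (s : ℝ) (hy : y ≠ c) :
    Δ (fun y => ‖y - c‖ ^ s) y = s * (s + finrank ℝ E - 2) * ‖y - c‖ ^ (s - 2) := by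
  have hpos : 0 < ‖y - c‖ := norm_pos_iff.2 (sub_ne_zero.2 hy)
  have hfst : ∀ᶠ z in 𝓝 y, HasFDerivAt (fun z => ‖z - c‖ ^ s)
      ((s * ‖z - c‖ ^ (s - 2)) • innerSL ℝ (z - c)) z :=
    (eventually_ne_nhds hy).mono fun z hz => hasFDerivAt_norm_sub_rpow s hz
  have hsnd := ((hasFDerivAt_norm_sub_rpow (s - 2) hy).const_mul s).smul
    ((innerSL ℝ).hasFDerivAt.comp y ((hasFDerivAt_id y).sub_const c))
  let b := stdOrthonormalBasis ℝ E
  have hpow : ‖y - c‖ ^ (s - 2 - 2) * ‖y - c‖ ^ 2 = ‖y - c‖ ^ (s - 2) := by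
    rw [← Real.rpow_natCast, ← Real.rpow_add hpos]; congr 1; push_cast; ring
  have hsum : ∑ i, s * ((s - 2) * ‖y - c‖ ^ (s - 2 - 2) * ⟪y - c, b i⟫) * ⟪y - c, b i⟫ =
      s * (s - 2) * (‖y - c‖ ^ (s - 2 - 2) * ‖y - c‖ ^ 2) := by
    rw [← b.sum_sq_inner_left (y - c), Finset.mul_sum, Finset.mul_sum]
    exact Finset.sum_congr rfl fun i _ => by ring
  have hinner (v w : E) : (innerSL ℝ : E →L[ℝ] E →L[ℝ] ℝ) v w = ⟪v, w⟫ := rfl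
  rw [laplacian_eq_sum_of_hasFDerivAt b hfst hsnd]
  simp only [ContinuousLinearMap.comp_id, id_eq, Function.comp_apply, add_apply, smul_apply,
    ContinuousLinearMap.smulRight_apply, hinner, smul_eq_mul, inner_self_eq_norm_sq_to_K,
    OrthonormalBasis.norm_eq_one, Real.ringHom_apply, one_pow, mul_one, Finset.sum_add_distrib,
    Finset.sum_const, Finset.card_univ, Fintype.card_fin, nsmul_eq_mul, hsum, hpow]
  ring

lemma laplacian_inversion (R : ℝ) (hy : y ≠ c) :
    Δ (inversion c R) y =
      ((4 - 2 * finrank ℝ E) * R ^ 2 * ‖y - c‖ ^ (-4 : ℝ)) • (y - c) := by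
  have : 0 < ‖y - c‖ := norm_pos_iff.2 (sub_ne_zero.2 hy)
  have hφ := contDiffAt_norm_sub_rpow (-2) hy
  have hsub : ContDiffAt ℝ 2 (fun z : E => z - c) y := contDiffAt_id.sub contDiffAt_const
  have hsubΔ : Δ (fun z : E => z - c) y = 0 := by
    have hfderiv : fderiv ℝ (fun z : E => z - c) = fun _ => .id ℝ E :=
      funext fun z => ((hasFDerivAt_id z).sub_const c).fderiv
    simp [laplacian_eq_sum_fderiv_fderiv (stdOrthonormalBasis ℝ E), hfderiv]
  have hsmul : ContDiffAt ℝ 2 (fun z : E => ‖z - c‖ ^ (-2 : ℝ) • (z - c)) y := hφ.smul hsub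
  have hmul : ContDiffAt ℝ 2 (R ^ 2 • fun z : E => ‖z - c‖ ^ (-2 : ℝ) • (z - c)) y :=
    contDiffAt_const.smul hsmul
  have hpow : ‖y - c‖ ^ (-2 - 2 : ℝ) = ‖y - c‖ ^ (-4 : ℝ) := by norm_num
  rw [inversion_eq_rpow_smul_add, hmul.laplacian_add contDiffAt_const, laplacian_smul _ hsmul,
    laplacian_fun_smul hφ hsub, hsubΔ, gradient_norm_sub_rpow _ hy, laplacian_norm_sub_rpow _ hy,
    hpow]
  simp only [smul_zero, zero_add, fderiv_sub_const, fderiv_fun_id, laplacian_const,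
    Pi.zero_apply, add_zero, ContinuousLinearMap.id_apply]
  module

lemma laplacian_kelvinTransform {R : ℝ} {v : E → F} (hy : y ≠ c)
    (hv : ContDiffAt ℝ 2 v (inversion c R y)) :
    Δ (kelvinTransform c R v) y =
      (‖y - c‖ ^ (2 - finrank ℝ E : ℝ) * (R / ‖y - c‖) ^ 4) • Δ v (inversion c R y) := by
  have hpos : 0 < ‖y - c‖ := norm_pos_iff.2 (sub_ne_zero.2 hy)
  have hI := contDiffAt_inversion R hy
  have hDI := (hasFDerivAt_inversion (R := R) hy).fderiv
  rw [dist_eq_norm] at hDI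
  have hchain : fderiv ℝ (v ∘ inversion c R) y (y - c) =
      -((R / ‖y - c‖) ^ 2 • fderiv ℝ v (inversion c R y) (y - c)) := by
    rw [fderiv_comp y (hv.differentiableAt (by simp)) (hI.differentiableAt (by simp)),
      ContinuousLinearMap.comp_apply, fderiv_inversion_sub_center R hy, map_neg, map_smul]
  have hpow : ‖y - c‖ ^ (2 - finrank ℝ E : ℝ) =
      ‖y - c‖ ^ (2 - finrank ℝ E - 2 : ℝ) * ‖y - c‖ ^ 2 := by
    rw [← Real.rpow_natCast, ← Real.rpow_add hpos]; congr 1; push_cast; ring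
  have hpow4 : ‖y - c‖ ^ (-4 : ℝ) = (‖y - c‖ ^ 4)⁻¹ := by
    rw [Real.rpow_neg hpos.le]; norm_cast
  change Δ (fun z => ‖z - c‖ ^ (2 - finrank ℝ E : ℝ) • (v ∘ inversion c R) z) y = _
  rw [laplacian_fun_smul (contDiffAt_norm_sub_rpow _ hy) (hv.comp y hI),
    laplacian_comp_of_fderiv_eq_smul_isometry hv hI hDI, gradient_norm_sub_rpow _ hy,
    laplacian_norm_sub_rpow _ hy, laplacian_inversion R hy, map_smul, map_smul, hchain, hpow4, hpow]
  match_scalars <;> field_simp <;> ring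

lemma harmonicAt_kelvinTransform {R : ℝ} {v : E → F} (hy : y ≠ c)
    (hv : HarmonicAt v (inversion c R y)) : HarmonicAt (kelvinTransform c R v) y := by
  have hI := (contDiffAt_inversion R hy).continuousAt
  refine ⟨contDiffAt_kelvinTransform hy hv.1, ?_⟩
  filter_upwards [eventually_ne_nhds hy, hI.eventually (hv.1.eventually (by simp)),
    hI.eventually hv.2] with z hzc hvz hΔ
  rw [laplacian_kelvinTransform hzc hvz, hΔ, Pi.zero_apply, smul_zero, Pi.zero_apply]

end Kelvin

section BallInversion

variable {E F : Type*} [NormedAddCommGroup E] [InnerProductSpace ℝ E]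
  [NormedAddCommGroup F] [NormedSpace ℝ F] {c x y : E} {R : ℝ}

lemma one_sub_norm_inversion_sq (hR : R ^ 2 = ‖c‖ ^ 2 - 1) (hy : y ≠ c) :
    1 - ‖inversion c R y‖ ^ 2 = (R / ‖y - c‖) ^ 2 * (1 - ‖y‖ ^ 2) := by
  have hpos : 0 < ‖y - c‖ := norm_pos_iff.2 (sub_ne_zero.2 hy)
  have hexpand : ‖y‖ ^ 2 = ‖y - c‖ ^ 2 + 2 * ⟪y - c, c⟫ + ‖c‖ ^ 2 := by
    rw [← norm_add_sq_real, sub_add_cancel]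
  rw [inversion, vsub_eq_sub, vadd_eq_add, dist_eq_norm, norm_add_sq_real, norm_smul,
    real_inner_smul_left, hexpand, Real.norm_of_nonneg (by positivity)]
  field_simp
  rw [hR]
  ring

lemma norm_inversion_lt_one (hc : 1 < ‖c‖) (hR : R ^ 2 = ‖c‖ ^ 2 - 1) (hy : ‖y‖ < 1) :
    ‖inversion c R y‖ < 1 := by
  have hyc := ne_of_apply_ne norm (hy.trans hc).ne
  have hR0 : R ≠ 0 := fun h => by nlinarith [h ▸ hR]
  have hpos : 0 < ‖y - c‖ := norm_pos_iff.2 (sub_ne_zero.2 hyc)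
  have hsq : 0 < 1 - ‖inversion c R y‖ ^ 2 := by
    rw [one_sub_norm_inversion_sq hR hyc]
    have : 0 < 1 - ‖y‖ ^ 2 := by nlinarith [norm_nonneg y]
    positivity
  nlinarith [norm_nonneg (inversion c R y)]

lemma inversion_zero_of_sq_eq (hc : c ≠ 0) (hR : R ^ 2 = ‖c‖ ^ 2 - 1) :
    inversion c R 0 = (‖c‖ ^ 2)⁻¹ • c := by
  have : 0 < ‖c‖ := norm_pos_iff.2 hc
  rw [inversion, dist_zero_left, div_pow, hR, vsub_eq_sub, vadd_eq_add]
  match_scalars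
  field_simp
  ring

lemma exists_one_lt_norm_smul_eq (hx0 : x ≠ 0) (hx : ‖x‖ < 1) :
    ∃ (c : E) (R : ℝ), 1 < ‖c‖ ∧ R ^ 2 = ‖c‖ ^ 2 - 1 ∧ (‖c‖ ^ 2)⁻¹ • c = x := by
  have hxpos : 0 < ‖x‖ := norm_pos_iff.2 hx0
  have hnorm : ‖(‖x‖ ^ 2)⁻¹ • x‖ = ‖x‖⁻¹ := by
    rw [norm_smul, norm_inv, norm_pow, norm_norm]; field_simp
  have hone : 1 < ‖x‖⁻¹ := (one_lt_inv₀ hxpos).2 hx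
  refine ⟨(‖x‖ ^ 2)⁻¹ • x, √(‖x‖⁻¹ ^ 2 - 1), hnorm ▸ hone, ?_, ?_⟩
  · rw [hnorm, Real.sq_sqrt (by nlinarith)]
  · rw [hnorm, inv_pow, inv_inv, smul_inv_smul₀ (by positivity)]

lemma norm_smul_kelvinTransform_le {v : E → F} (hy : y ≠ c) (hc : c ≠ 0)
    (hv : ‖v (inversion c R y)‖ ≤ 1) :
    ‖‖c‖ ^ (finrank ℝ E - 2 : ℝ) • kelvinTransform c R v y‖ ≤
      (‖y - c‖ ^ 2 / ‖c‖ ^ 2) ^ ((2 - finrank ℝ E : ℝ) / 2) := by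
  have hpos : 0 < ‖c‖ := norm_pos_iff.2 hc
  have hpos' : 0 < ‖y - c‖ := norm_pos_iff.2 (sub_ne_zero.2 hy)
  have hweight : (‖y - c‖ ^ 2 / ‖c‖ ^ 2) ^ ((2 - finrank ℝ E : ℝ) / 2) =
      ‖c‖ ^ (finrank ℝ E - 2 : ℝ) * ‖y - c‖ ^ (2 - finrank ℝ E : ℝ) := by
    rw [← div_pow, ← Real.rpow_natCast_mul (by positivity), Real.div_rpow hpos'.le hpos.le,
      div_eq_inv_mul, ← Real.rpow_neg hpos.le]
    congr 2 <;> push_cast <;> ring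
  rw [kelvinTransform, smul_smul, norm_smul, Real.norm_of_nonneg (by positivity), hweight]
  exact mul_le_of_le_one_right (by positivity) hv

lemma smul_fderiv_kelvinTransform_zero {v : E → F} (hc : c ≠ 0)
    (hv : DifferentiableAt ℝ v (inversion c R 0)) (w : E) :
    ‖c‖ ^ (finrank ℝ E - 2 : ℝ) • fderiv ℝ (kelvinTransform c R v) 0 w =
      (R / ‖c‖) ^ 2 • fderiv ℝ v (inversion c R 0) ((ℝ ∙ (-c))ᗮ.reflection w)
        + ((finrank ℝ E - 2) * ⟪(‖c‖ ^ 2)⁻¹ • c, w⟫) • v (inversion c R 0) := by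
  have hpos : 0 < ‖c‖ := norm_pos_iff.2 hc
  have hcancel : ‖c‖ ^ (finrank ℝ E - 2 : ℝ) * ‖c‖ ^ (2 - finrank ℝ E : ℝ) = 1 := by
    rw [← Real.rpow_add hpos]; simp
  have hpow : ‖c‖ ^ (finrank ℝ E - 2 : ℝ) * ‖c‖ ^ (-finrank ℝ E : ℝ) = (‖c‖ ^ 2)⁻¹ := by
    rw [← Real.rpow_add hpos, ← Real.rpow_natCast, ← Real.rpow_neg hpos.le]
    congr 1; push_cast; ring
  rw [fderiv_kelvinTransform hc.symm hv, zero_sub, norm_neg, smul_add, smul_smul, hcancel,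
    one_smul, map_smul, smul_smul, inner_neg_left, real_inner_smul_left, ← hpow]
  module

variable [FiniteDimensional ℝ E]

lemma harmonicOnNhd_ball_kelvinTransform {v : E → F} (hc : 1 < ‖c‖) (hR : R ^ 2 = ‖c‖ ^ 2 - 1)
    (hv : HarmonicOnNhd v (Metric.ball 0 1)) :
    HarmonicOnNhd (kelvinTransform c R v) (Metric.ball 0 1) := fun y hy => by
  rw [mem_ball_zero_iff] at hy
  exact harmonicAt_kelvinTransform (ne_of_apply_ne norm (hy.trans hc).ne)
    (hv _ (mem_ball_zero_iff.2 (norm_inversion_lt_one hc hR hy)))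

-- For `x ≠ 0` the inversion centred at `x / ‖x‖ ^ 2` that preserves the unit sphere exchanges `0`
-- and `x`, so a multiple of the Kelvin transform moves the point `x` to the origin.
lemma exists_harmonicOnNhd_ball_fderiv_eq {v : E → F} (hx : ‖x‖ < 1)
    (hv : HarmonicOnNhd v (Metric.ball 0 1)) (hbound : ∀ y ∈ Metric.ball 0 1, ‖v y‖ ≤ 1) :
    ∃ (g : E → F) (L : E ≃ₗᵢ[ℝ] E), HarmonicOnNhd g (Metric.ball 0 1) ∧
      (∀ y ∈ Metric.ball 0 1,
        ‖g y‖ ≤ (1 - 2 * ⟪x, y⟫ + ‖x‖ ^ 2 * ‖y‖ ^ 2) ^ ((2 - finrank ℝ E : ℝ) / 2)) ∧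
      ∀ w, (1 - ‖x‖ ^ 2) • fderiv ℝ v x (L w) =
        fderiv ℝ g 0 w - ((finrank ℝ E - 2) * ⟪x, w⟫) • g 0 := by
  rcases eq_or_ne x 0 with rfl | hx0
  · exact ⟨v, .refl ℝ E, hv, by simpa using hbound, by simp⟩
  obtain ⟨c, R, hc, hR, hxc⟩ := exists_one_lt_norm_smul_eq hx0 hx
  have hc0 : c ≠ 0 := norm_pos_iff.1 (one_pos.trans hc)
  have hinv0 : inversion c R 0 = x := (inversion_zero_of_sq_eq hc0 hR).trans hxc
  have hvx : DifferentiableAt ℝ v x :=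
    (hv x (mem_ball_zero_iff.2 hx)).1.differentiableAt (by simp)
  refine ⟨‖c‖ ^ (finrank ℝ E - 2 : ℝ) • kelvinTransform c R v, (ℝ ∙ (-c))ᗮ.reflection,
    (harmonicOnNhd_ball_kelvinTransform hc hR hv).const_smul, fun y hy => ?_, fun w => ?_⟩
  · rw [mem_ball_zero_iff] at hy
    refine (norm_smul_kelvinTransform_le (ne_of_apply_ne norm (hy.trans hc).ne) hc0
      (hbound _ (mem_ball_zero_iff.2 (norm_inversion_lt_one hc hR hy)))).trans_eq ?_
    congr 1
    rw [← hxc, norm_sub_sq_real, norm_smul, real_inner_smul_left, real_inner_comm, norm_inv,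
      norm_pow, norm_norm]
    field_simp
    ring
  · have hK0 : DifferentiableAt ℝ (kelvinTransform c R v) 0 :=
      (contDiffAt_kelvinTransform hc0.symm (hinv0 ▸ (hv x (mem_ball_zero_iff.2 hx)).1))
        |>.differentiableAt (by simp)
    have hg0 : (‖c‖ ^ (finrank ℝ E - 2 : ℝ) • kelvinTransform c R v) 0 = v x := by
      rw [Pi.smul_apply, kelvinTransform, hinv0, smul_smul, zero_sub, norm_neg,
        ← Real.rpow_add (one_pos.trans hc)]
      simp
    have hfactor : (R / ‖c‖) ^ 2 = 1 - ‖x‖ ^ 2 := by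
      have : 0 < ‖c‖ := norm_pos_iff.2 hc0
      rw [← hxc, norm_smul, norm_inv, norm_pow, norm_norm, div_pow, hR]
      field_simp
    rw [fderiv_const_smul hK0, smul_apply,
      smul_fderiv_kelvinTransform_zero hc0 (hinv0.symm ▸ hvx) w, hg0, hinv0, hxc, hfactor,
      add_sub_cancel_right]

end BallInversion

section RadialPrimitive

variable {E : Type*} [NormedAddCommGroup E] {h : ℝ → ℝ} {β : ℝ}

/-- The radial function whose gradient at `y` is `-2 h(‖y‖²) y` and which vanishes on the sphere
`‖y‖² = β`. Multiplying by it and integrating by parts produces radially weighted integrals. -/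
noncomputable def radialPrimitive (h : ℝ → ℝ) (β : ℝ) (y : E) : ℝ :=
  ∫ s in ‖y‖ ^ 2..β, h s

lemma intervalIntegral_eq_zero_of_le (hzero : ∀ s, β ≤ s → h s = 0) {t : ℝ} (ht : β ≤ t) :
    ∫ s in t..β, h s = 0 := by
  rw [intervalIntegral.integral_congr (g := fun _ => 0), intervalIntegral.integral_zero]
  intro s hs
  rw [uIcc_of_ge ht] at hs
  exact hzero s hs.1

lemma hasCompactSupport_of_forall_le_norm_sq [ProperSpace E] {F : Type*} [Zero F] {f : E → F}
    (hf : ∀ y, β ≤ ‖y‖ ^ 2 → f y = 0) : HasCompactSupport f := by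
  refine HasCompactSupport.intro (isCompact_closedBall 0 √β) fun y hy => hf y ?_
  rw [mem_closedBall_zero_iff, not_le] at hy
  exact (Real.lt_sq_of_sqrt_lt hy).le

variable [InnerProductSpace ℝ E]

lemma hasFDerivAt_radialPrimitive (hh : Continuous h) (β : ℝ) (y : E) :
    HasFDerivAt (radialPrimitive h β) ((-2 * h (‖y‖ ^ 2)) • innerSL ℝ y) y := by
  have hprim : HasDerivAt (fun t => ∫ s in t..β, h s) (-h (‖y‖ ^ 2)) (‖y‖ ^ 2) :=
    intervalIntegral.integral_hasDerivAt_left (hh.intervalIntegrable _ _)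
      (hh.stronglyMeasurableAtFilter _ _) hh.continuousAt
  refine (hprim.comp_hasFDerivAt y (hasStrictFDerivAt_norm_sq y).hasFDerivAt).congr_fderiv ?_
  ext w
  simp only [smul_apply, nsmul_eq_mul, smul_eq_mul, Nat.cast_ofNat]
  ring

lemma contDiff_radialPrimitive (hh : Continuous h) (β : ℝ) :
    ContDiff ℝ 1 (radialPrimitive h β : E → ℝ) := by
  refine contDiff_one_iff_hasFDerivAt.2
    ⟨fun y => (-2 * h (‖y‖ ^ 2)) • innerSL ℝ y, ?_, hasFDerivAt_radialPrimitive hh β⟩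
  exact (by fun_prop : Continuous fun y : E => -2 * h (‖y‖ ^ 2)).smul
    (innerSL ℝ (E := E)).continuous

lemma fderiv_radialPrimitive_apply (hh : Continuous h) (β : ℝ) (y w : E) :
    fderiv ℝ (radialPrimitive h β) y w = -2 * h (‖y‖ ^ 2) * ⟪y, w⟫ := by
  rw [(hasFDerivAt_radialPrimitive hh β y).fderiv]
  simp

lemma gradient_radialPrimitive [CompleteSpace E] (hh : Continuous h) (β : ℝ) (y : E) :
    ∇ (radialPrimitive h β) y = (-2 * h (‖y‖ ^ 2)) • y := by
  refine HasGradientAt.gradient (hasGradientAt_iff_hasFDerivAt.2 ?_)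
  refine (hasFDerivAt_radialPrimitive hh β y).congr_fderiv ?_
  ext w
  simp

end RadialPrimitive

lemma exists_contDiff_eqOn_ball {E F : Type*} [NormedAddCommGroup E] [NormedSpace ℝ E]
    [HasContDiffBump E] [NormedAddCommGroup F] [NormedSpace ℝ F] {n : ℕ∞} {f : E → F} {c : E}
    {r R : ℝ} (hr : 0 < r) (hrR : r < R)
    (hf : ContDiffOn ℝ n f (Metric.ball c R)) :
    ∃ g : E → F, ContDiff ℝ n g ∧ EqOn g f (Metric.ball c r) := by
  obtain ⟨R', hrR', hR'⟩ := exists_between hrR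
  let φ : ContDiffBump c := ⟨r, R', hr, hrR'⟩
  refine ⟨fun y => φ y • f y, contDiff_iff_contDiffAt.2 fun y => ?_, fun y hy => ?_⟩
  · by_cases hy : y ∈ Metric.ball c R
    · exact φ.contDiffAt.smul (hf.contDiffAt (Metric.isOpen_ball.mem_nhds hy))
    · have hyR' : y ∈ (Metric.closedBall c R')ᶜ := fun h =>
        hy (Metric.closedBall_subset_ball hR' h)
      refine (contDiffAt_const (c := 0)).congr_of_eventuallyEq ?_
      filter_upwards [Metric.isClosed_closedBall.isOpen_compl.mem_nhds hyR'] with w hw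
      rw [φ.zero_of_le_dist (not_le.1 (Metric.mem_closedBall.not.1 hw)).le, zero_smul]
  · change φ y • f y = f y
    rw [φ.one_of_mem_closedBall (Metric.ball_subset_closedBall hy), one_smul]

section MeanValue

variable {E : Type*} [NormedAddCommGroup E] [InnerProductSpace ℝ E] [FiniteDimensional ℝ E]

lemma laplacian_norm_sq (y : E) : Δ (fun y : E => ‖y‖ ^ 2) y = 2 * finrank ℝ E := by
  have hsnd : HasFDerivAt (fun y : E => 2 • innerSL ℝ y) (2 • innerSL ℝ (E := E)) y :=
    (2 • innerSL ℝ (E := E)).hasFDerivAt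
  have hinner (v w : E) : (innerSL ℝ : E →L[ℝ] E →L[ℝ] ℝ) v w = ⟪v, w⟫ := rfl
  rw [laplacian_eq_sum_of_hasFDerivAt (stdOrthonormalBasis ℝ E)
    (.of_forall fun y => (hasStrictFDerivAt_norm_sq y).hasFDerivAt) hsnd]
  simp [hinner, mul_comm]

lemma laplacian_comp_add_smul {G : E → ℝ} (hG : ContDiff ℝ 2 G) (z : E) (τ : ℝ) (y : E) :
    Δ (fun y => G (z + τ • y)) y = τ ^ 2 * Δ G (z + τ • y) := by
  have hfderiv (y : E) : fderiv ℝ (fun y => z + τ • y) y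
      = τ • (LinearIsometryEquiv.refl ℝ E : E →L[ℝ] E) :=
    (((hasFDerivAt_id y).const_smul τ).const_add z).fderiv
  have hlap : Δ (fun y => z + τ • y) y = 0 := by
    rw [laplacian_eq_sum_fderiv_fderiv (stdOrthonormalBasis ℝ E), funext hfderiv]
    simp
  have hcomp := laplacian_comp_of_fderiv_eq_smul_isometry hG.contDiffAt
    (by fun_prop : ContDiffAt ℝ 2 (fun y => z + τ • y) y) (hfderiv y)
  rwa [hlap, map_zero, add_zero] at hcomp

variable [MeasurableSpace E] [BorelSpace E] {G : E → ℝ} {h : ℝ → ℝ} {β : ℝ}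

lemma integral_laplacian_mul {Ψ : E → ℝ} (hG : ContDiff ℝ 2 G) (hΨ : ContDiff ℝ 1 Ψ)
    (hΨc : HasCompactSupport Ψ) : ∫ y, Δ G y * Ψ y = -∫ y, fderiv ℝ G y (∇ Ψ y) := by
  let b := stdOrthonormalBasis ℝ E
  have hG' : ContDiff ℝ 1 (fderiv ℝ G) := hG.fderiv_right (by norm_num)
  have hDG (i) : ContDiff ℝ 1 fun y => fderiv ℝ G y (b i) := hG'.clm_apply contDiff_const
  have hDDG (i) : Continuous fun y => fderiv ℝ (fun y => fderiv ℝ G y (b i)) y (b i) :=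
    ((hDG i).continuous_fderiv (by simp)).clm_apply continuous_const
  have hDΨ (i) : Continuous fun y => fderiv ℝ Ψ y (b i) :=
    (hΨ.continuous_fderiv (by simp)).clm_apply continuous_const
  have hint (i) : Integrable fun y => fderiv ℝ (fun y => fderiv ℝ G y (b i)) y (b i) * Ψ y :=
    ((hDDG i).mul hΨ.continuous).integrable_of_hasCompactSupport hΨc.mul_left
  have hint' (i) : Integrable fun y => fderiv ℝ G y (b i) * fderiv ℝ Ψ y (b i) :=
    ((hDG i).continuous.mul (hDΨ i)).integrable_of_hasCompactSupport
      (hΨc.fderiv_apply (𝕜 := ℝ) (b i)).mul_left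
  have hparts (i) : ∫ y, fderiv ℝ (fun y => fderiv ℝ G y (b i)) y (b i) * Ψ y
      = -∫ y, fderiv ℝ G y (b i) * fderiv ℝ Ψ y (b i) := by
    rw [integral_mul_fderiv_eq_neg_fderiv_mul_of_integrable (hint i) (hint' i)
      (((hDG i).continuous.mul hΨ.continuous).integrable_of_hasCompactSupport hΨc.mul_left)
      (fun y _ => (hDG i).differentiable (by simp) y)
      (fun y _ => hΨ.differentiable (by simp) y), neg_neg]
  have hlap (y : E) : Δ G y = ∑ i, fderiv ℝ (fun y => fderiv ℝ G y (b i)) y (b i) := by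
    rw [laplacian_eq_sum_fderiv_fderiv b]
    refine Finset.sum_congr rfl fun i _ => ?_
    rw [fderiv_clm_apply (hG'.differentiable (by simp) y) (differentiableAt_const _)]
    simp
  simp_rw [hlap, fderiv_apply_gradient_eq_sum b, Finset.sum_mul, smul_eq_mul,
    mul_comm (fderiv ℝ Ψ _ _)]
  rw [integral_finsetSum _ fun i _ => hint i, integral_finsetSum _ fun i _ => hint' i,
    ← Finset.sum_neg_distrib]
  exact Finset.sum_congr rfl fun i _ => hparts i

lemma integral_laplacian_mul_radialPrimitive (hG : ContDiff ℝ 2 G) (hh : Continuous h)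
    (hzero : ∀ s, β ≤ s → h s = 0) :
    ∫ y, Δ G y * radialPrimitive h β y = 2 * ∫ y, h (‖y‖ ^ 2) * fderiv ℝ G y y := by
  rw [integral_laplacian_mul hG (contDiff_radialPrimitive hh β)
    (hasCompactSupport_of_forall_le_norm_sq fun _ => intervalIntegral_eq_zero_of_le hzero),
    ← integral_neg, ← integral_const_mul]
  simp_rw [gradient_radialPrimitive hh, map_smul, smul_eq_mul]
  exact integral_congr_ae (.of_forall fun y => by ring)

lemma hasDerivAt_integral_radial_mul_comp_add_smul (hG : ContDiff ℝ 1 G) (hh : Continuous h)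
    (hzero : ∀ s, β ≤ s → h s = 0) (z : E) (τ : ℝ) :
    HasDerivAt (fun τ : ℝ => ∫ y, h (‖y‖ ^ 2) * G (z + τ • y))
      (∫ y, h (‖y‖ ^ 2) * fderiv ℝ G (z + τ • y) y) τ := by
  have hsupp : HasCompactSupport fun y : E => h (‖y‖ ^ 2) :=
    hasCompactSupport_of_forall_le_norm_sq fun _ => hzero _
  have hcont (τ : ℝ) : Continuous fun y => h (‖y‖ ^ 2) * G (z + τ • y) := by
    have := hG.continuous
    fun_prop
  have hcont' : Continuous fun q : ℝ × E => h (‖q.2‖ ^ 2) * fderiv ℝ G (z + q.1 • q.2) q.2 :=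
    (by fun_prop : Continuous fun q : ℝ × E => h (‖q.2‖ ^ 2)).mul
      (((hG.continuous_fderiv (by simp)).comp (by fun_prop)).clm_apply continuous_snd)
  obtain ⟨C, hC⟩ := ((isCompact_closedBall τ 1).prod hsupp).exists_bound_of_continuousOn
    hcont'.continuousOn
  refine (hasDerivAt_integral_of_dominated_loc_of_deriv_le
    (F' := fun σ y => h (‖y‖ ^ 2) * fderiv ℝ G (z + σ • y) y)
    (bound := (tsupport fun y : E => h (‖y‖ ^ 2)).indicator fun _ => C)
    (Metric.ball_mem_nhds τ one_pos) (.of_forall fun τ => (hcont τ).aestronglyMeasurable)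
    ((hcont τ).integrable_of_hasCompactSupport hsupp.mul_right)
    (hcont'.comp (Continuous.prodMk_right τ)).aestronglyMeasurable
    (.of_forall fun y σ hσ => ?_) ?_ (.of_forall fun y σ _ => ?_)).2
  · by_cases hy : y ∈ tsupport fun y : E => h (‖y‖ ^ 2)
    · rw [indicator_of_mem hy]
      exact hC (σ, y) ⟨Metric.ball_subset_closedBall hσ, hy⟩
    · rw [indicator_of_notMem hy, image_eq_zero_of_notMem_tsupport hy, zero_mul, norm_zero]
  · rw [integrable_indicator_iff (isClosed_tsupport _).measurableSet]
    exact integrableOn_const hsupp.measure_lt_top.ne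
  · have haff : HasDerivAt (fun σ : ℝ => z + σ • y) y σ := by
      simpa using ((hasDerivAt_id σ).smul_const y).const_add z
    exact ((hG.differentiable (by simp) _).hasFDerivAt.comp_hasDerivAt σ haff).const_mul _

lemma integral_radial_mul_fderiv_comp_add_smul (hG : ContDiff ℝ 2 G) (hh : Continuous h)
    (hzero : ∀ s, β ≤ s → h s = 0) {z : E} (hlap : ∀ y, ‖y‖ ^ 2 < β → Δ G (z + y) = 0)
    {τ : ℝ} (hτ : τ ∈ Ioo 0 1) : ∫ y, h (‖y‖ ^ 2) * fderiv ℝ G (z + τ • y) y = 0 := by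
  have hchain (y : E) : fderiv ℝ (fun y => G (z + τ • y)) y y = τ * fderiv ℝ G (z + τ • y) y := by
    have haff : HasFDerivAt (fun y => z + τ • y) (τ • ContinuousLinearMap.id ℝ E) y :=
      ((hasFDerivAt_id y).const_smul τ).const_add z
    have hcomp := (hG.differentiable (by simp) (z + τ • y)).hasFDerivAt.comp y haff
    rw [Function.comp_def] at hcomp
    simp [hcomp.fderiv]
  have hvanish (y : E) : τ ^ 2 * Δ G (z + τ • y) * radialPrimitive h β y = 0 := by
    rcases lt_or_ge (‖y‖ ^ 2) β with hy | hy
    · rw [hlap (τ • y), mul_zero, zero_mul]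
      refine lt_of_le_of_lt ?_ hy
      rw [norm_smul, Real.norm_of_nonneg hτ.1.le]
      exact pow_le_pow_left₀ (mul_nonneg hτ.1.le (norm_nonneg y))
        (mul_le_of_le_one_left (norm_nonneg y) hτ.2.le) 2
    · rw [radialPrimitive, intervalIntegral_eq_zero_of_le hzero hy, mul_zero]
  have hgreen := integral_laplacian_mul_radialPrimitive
    (hG.comp (by fun_prop : ContDiff ℝ 2 fun y : E => z + τ • y)) hh hzero
  simp only [Function.comp_def, laplacian_comp_add_smul hG, hvanish, hchain,
    mul_left_comm _ τ, integral_zero, integral_const_mul] at hgreen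
  simpa [hτ.1.ne'] using hgreen

lemma integral_radial_mul_comp_add (hG : ContDiff ℝ 2 G) (hh : Continuous h)
    (hzero : ∀ s, β ≤ s → h s = 0) {z : E} (hlap : ∀ y, ‖y‖ ^ 2 < β → Δ G (z + y) = 0) :
    ∫ y, h (‖y‖ ^ 2) * G (z + y) = (∫ y : E, h (‖y‖ ^ 2)) * G z := by
  have hderiv (τ : ℝ) := hasDerivAt_integral_radial_mul_comp_add_smul (hG.of_le (by simp)) hh hzero
    z τ
  obtain ⟨τ, hτ, hslope⟩ := exists_hasDerivAt_eq_slope _ _ one_pos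
    (continuous_iff_continuousAt.2 fun τ => (hderiv τ).continuousAt).continuousOn
    fun τ _ => hderiv τ
  rw [integral_radial_mul_fderiv_comp_add_smul hG hh hzero hlap hτ] at hslope
  simp only [one_smul, zero_smul, add_zero, sub_zero, div_one, integral_mul_const] at hslope
  exact sub_eq_zero.1 hslope.symm

lemma integral_radialPrimitive (hh : Continuous h) (hzero : ∀ s, β ≤ s → h s = 0) :
    finrank ℝ E * ∫ y : E, radialPrimitive h β y = 2 * ∫ y : E, h (‖y‖ ^ 2) * ‖y‖ ^ 2 := by
  have hgreen := integral_laplacian_mul_radialPrimitive (E := E) (contDiff_norm_sq ℝ) hh hzero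
  have hfderiv (y : E) : fderiv ℝ (fun y : E => ‖y‖ ^ 2) y y = 2 * ‖y‖ ^ 2 := by
    rw [(hasStrictFDerivAt_norm_sq y).hasFDerivAt.fderiv]
    simp
  simp only [laplacian_norm_sq, hfderiv, mul_assoc, mul_left_comm _ (2 : ℝ),
    integral_const_mul] at hgreen
  linarith

lemma integral_radialPrimitive_mul_fderiv (hG : ContDiff ℝ 2 G) (hh : Continuous h)
    (hzero : ∀ s, β ≤ s → h s = 0)
    (hlap : ∀ᶠ z in 𝓝 (0 : E), ∀ y, ‖y‖ ^ 2 < β → Δ G (z + y) = 0) (w : E) :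
    (∫ y : E, radialPrimitive h β y) * fderiv ℝ G 0 w
      = 2 * ∫ y, h (‖y‖ ^ 2) * ⟪y, w⟫ * G y := by
  have hsupp : HasCompactSupport (radialPrimitive h β : E → ℝ) :=
    hasCompactSupport_of_forall_le_norm_sq fun _ => intervalIntegral_eq_zero_of_le hzero
  have hcont : Continuous fun t => ∫ s in t..β, h s := by
    simp_rw [fun t => intervalIntegral.integral_symm (f := h) (μ := volume) β t]
    exact (intervalIntegral.continuous_primitive (fun a b => hh.intervalIntegrable a b) β).neg
  have hmean : (convolution (radialPrimitive h β) G (.lsmul ℝ ℝ) volume)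
      =ᶠ[𝓝 0] fun z => (∫ y : E, radialPrimitive h β y) * G z := by
    filter_upwards [hlap] with z hz
    refine Eq.trans ?_ (integral_radial_mul_comp_add hG hcont
      (fun _ => intervalIntegral_eq_zero_of_le hzero) hz)
    rw [convolution_def, ← integral_neg_eq_self]
    exact integral_congr_ae (.of_forall fun y => by simp [radialPrimitive])
  have hder := (hG.differentiable (by simp) 0).hasFDerivAt.const_mul
    (∫ y : E, radialPrimitive h β y)
  have hconv := hsupp.hasFDerivAt_convolution_left (.lsmul ℝ ℝ) (contDiff_radialPrimitive hh β)
    (hG.continuous.locallyIntegrable (μ := volume)) 0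
  have happly := congrArg (· w) (hder.unique (hconv.congr_of_eventuallyEq hmean.symm))
  simp only [smul_apply, smul_eq_mul] at happly
  rw [happly, convolution_def, ContinuousLinearMap.integral_apply, ← integral_neg_eq_self,
    ← integral_const_mul]
  · refine integral_congr_ae (.of_forall fun y => ?_)
    simp only [sub_neg_eq_add, zero_add, ContinuousLinearMap.precompL_apply,
      fderiv_radialPrimitive_apply hh, norm_neg, neg_mul, inner_neg_left, mul_neg, neg_neg,
      ContinuousLinearMap.lsmul_apply, smul_eq_mul]
    ring
  · exact (hsupp.fderiv (𝕜 := ℝ)).convolutionExists_left _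
      ((contDiff_radialPrimitive hh β).continuous_fderiv (by simp))
      hG.continuous.locallyIntegrable 0

lemma fderiv_sub_mul_integral_radial (hG : ContDiff ℝ 2 G) (hh : Continuous h)
    (hzero : ∀ s, β ≤ s → h s = 0)
    (hlap : ∀ᶠ z in 𝓝 (0 : E), ∀ y, ‖y‖ ^ 2 < β → Δ G (z + y) = 0) (w : E) (c : ℝ) :
    (fderiv ℝ G 0 w - c * G 0) * ∫ y : E, h (‖y‖ ^ 2) * ‖y‖ ^ 2
      = ∫ y, h (‖y‖ ^ 2) * (finrank ℝ E * ⟪y, w⟫ - c * ‖y‖ ^ 2) * G y := by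
  have hsupp : HasCompactSupport fun y : E => h (‖y‖ ^ 2) :=
    hasCompactSupport_of_forall_le_norm_sq fun _ => hzero _
  have hint {f : E → ℝ} (hf : Continuous f) : Integrable fun y => h (‖y‖ ^ 2) * f y * G y :=
    Continuous.integrable_of_hasCompactSupport
      (by have := hG.continuous; fun_prop) hsupp.mul_right.mul_right
  have hgrad := integral_radialPrimitive_mul_fderiv hG hh hzero hlap w
  have hmass := integral_radialPrimitive (E := E) hh hzero
  have hmean : ∫ y, h (‖y‖ ^ 2) * ‖y‖ ^ 2 * G y = (∫ y : E, h (‖y‖ ^ 2) * ‖y‖ ^ 2) * G 0 := by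
    simpa using integral_radial_mul_comp_add (z := 0) (h := fun s => h s * s) hG (by fun_prop)
      (fun s hs => by rw [hzero s hs, zero_mul]) hlap.self_of_nhds
  calc _ = finrank ℝ E * (∫ y, h (‖y‖ ^ 2) * ⟪y, w⟫ * G y)
        - c * ∫ y, h (‖y‖ ^ 2) * ‖y‖ ^ 2 * G y := by
        rw [hmean]
        linear_combination (-1 / 2 * fderiv ℝ G 0 w) * hmass + finrank ℝ E / 2 * hgrad
    _ = ∫ y, h (‖y‖ ^ 2) * (finrank ℝ E * ⟪y, w⟫ - c * ‖y‖ ^ 2) * G y := by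
        rw [← integral_const_mul, ← integral_const_mul, ← integral_sub
          ((hint (by fun_prop)).const_mul _) ((hint (by fun_prop)).const_mul _)]
        exact integral_congr_ae (.of_forall fun y => by ring)

theorem fderiv_sub_mul_integral_radial_of_harmonicOnNhd {g : E → ℝ}
    (hg : HarmonicOnNhd g (Metric.ball 0 1)) (hh : Continuous h) (hβ : β < 1)
    (hzero : ∀ s, β ≤ s → h s = 0) (w : E) (c : ℝ) :
    (fderiv ℝ g 0 w - c * g 0) * ∫ y : E, h (‖y‖ ^ 2) * ‖y‖ ^ 2
      = ∫ y, h (‖y‖ ^ 2) * (finrank ℝ E * ⟪y, w⟫ - c * ‖y‖ ^ 2) * g y := by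
  obtain ⟨r, hβr, hr1⟩ := exists_between ((Real.sqrt_lt' one_pos).2 (by rwa [one_pow]) : √β < 1)
  have hr : 0 < r := (Real.sqrt_nonneg β).trans_lt hβr
  obtain ⟨G, hG, hGg⟩ := exists_contDiff_eqOn_ball (n := 2) hr hr1 hg.contDiffOn
  have hnear {y : E} (hy : ‖y‖ < r) : G =ᶠ[𝓝 y] g :=
    hGg.eventuallyEq_of_mem (Metric.isOpen_ball.mem_nhds (mem_ball_zero_iff.2 hy))
  have hlap : ∀ᶠ z in 𝓝 (0 : E), ∀ y, ‖y‖ ^ 2 < β → Δ G (z + y) = 0 := by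
    filter_upwards [Metric.ball_mem_nhds (0 : E) (sub_pos.2 hβr)] with z hz y hy
    have hzy : ‖z + y‖ < r := by
      linarith [norm_add_le z y, mem_ball_zero_iff.1 hz, Real.lt_sqrt_of_sq_lt hy]
    rw [(laplacian_congr_nhds (hnear hzy)).eq_of_nhds]
    exact (hg _ (mem_ball_zero_iff.2 (hzy.trans hr1))).2.eq_of_nhds
  have h0 := hnear (norm_zero.trans_lt hr)
  rw [← h0.fderiv_eq, ← h0.eq_of_nhds, fderiv_sub_mul_integral_radial hG hh hzero hlap]
  refine integral_congr_ae (.of_forall fun y => ?_)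
  rcases lt_or_ge (‖y‖ ^ 2) β with hy | hy
  · simp only [hGg (mem_ball_zero_iff.2 ((Real.lt_sqrt_of_sq_lt hy).trans hβr))]
  · simp only [hzero _ hy, zero_mul]

end MeanValue

section CircleAverage

lemma intervalIntegral_comp_cos_sub (f : ℝ → ℝ) (α : ℝ) :
    ∫ φ in (-Real.pi)..Real.pi, f (Real.cos (φ - α)) =
      ∫ φ in (-Real.pi)..Real.pi, f (Real.cos φ) := by
  have hperiodic : Function.Periodic (fun φ => f (Real.cos φ)) (2 * Real.pi) :=
    fun φ => congrArg f (Real.cos_add_two_pi φ)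
  rw [intervalIntegral.integral_comp_sub_right (fun φ => f (Real.cos φ)),
    show Real.pi - α = -Real.pi - α + 2 * Real.pi by ring,
    hperiodic.intervalIntegral_add_eq (-Real.pi - α) (-Real.pi),
    show -Real.pi + 2 * Real.pi = Real.pi by ring]

lemma intervalIntegral_abs_neg_add_mul_cos (b R : ℝ) :
    ∫ φ in (-Real.pi)..Real.pi, |-b + R * Real.cos φ| =
      ∫ φ in (-Real.pi)..Real.pi, |b + R * Real.cos φ| := by
  rw [← intervalIntegral_comp_cos_sub (fun c => |-b + R * c|) Real.pi]
  refine intervalIntegral.integral_congr fun φ _ => ?_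
  simp only [Real.cos_sub_pi, mul_neg, ← neg_add, abs_neg]

lemma intervalIntegral_abs_mul_add_mul_cos_le {s : ℝ} (hs : |s| ≤ 1) (b R : ℝ) :
    ∫ φ in (-Real.pi)..Real.pi, |b * s + R * Real.cos φ| ≤
      ∫ φ in (-Real.pi)..Real.pi, |b + R * Real.cos φ| := by
  obtain ⟨hs_lower, hs_upper⟩ := abs_le.mp hs
  have hint (d : ℝ) :
      IntervalIntegrable (fun φ => |d + R * Real.cos φ|) volume (-Real.pi) Real.pi :=
    Continuous.intervalIntegrable (by fun_prop) _ _
  have hconvex (φ : ℝ) : |b * s + R * Real.cos φ| ≤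
      (1 + s) / 2 * |b + R * Real.cos φ| + (1 - s) / 2 * |-b + R * Real.cos φ| := by
    have hsplit := abs_add_le ((1 + s) / 2 * (b + R * Real.cos φ))
      ((1 - s) / 2 * (-b + R * Real.cos φ))
    rw [abs_mul, abs_mul, abs_of_nonneg (show 0 ≤ (1 + s) / 2 by linarith),
      abs_of_nonneg (show 0 ≤ (1 - s) / 2 by linarith)] at hsplit
    refine le_of_eq_of_le (congrArg _ ?_) hsplit
    ring
  calc ∫ φ in (-Real.pi)..Real.pi, |b * s + R * Real.cos φ|
      ≤ ∫ φ in (-Real.pi)..Real.pi,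
          ((1 + s) / 2 * |b + R * Real.cos φ| + (1 - s) / 2 * |-b + R * Real.cos φ|) :=
        intervalIntegral.integral_mono (by linarith [Real.pi_pos]) (hint _)
          (((hint b).const_mul _).add ((hint (-b)).const_mul _)) hconvex
    _ = ∫ φ in (-Real.pi)..Real.pi, |b + R * Real.cos φ| := by
        rw [intervalIntegral.integral_add ((hint b).const_mul _) ((hint (-b)).const_mul _),
          intervalIntegral.integral_const_mul, intervalIntegral.integral_const_mul,
          intervalIntegral_abs_neg_add_mul_cos]
        ring

lemma lintegral_ofReal_Ioo_eq_intervalIntegral {f : ℝ → ℝ} {a b : ℝ} (hab : a ≤ b)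
    (hf : IntervalIntegrable f volume a b) (hf0 : ∀ t ∈ Ioo a b, 0 ≤ f t) :
    ∫⁻ t in Ioo a b, ENNReal.ofReal (f t) = ENNReal.ofReal (∫ t in a..b, f t) := by
  rw [intervalIntegral.integral_of_le hab, ← restrict_Ioo_eq_restrict_Ioc,
    ofReal_integral_eq_lintegral_ofReal (hf.1.mono_set Ioo_subset_Ioc_self)
      (ae_restrict_of_forall_mem measurableSet_Ioo hf0)]

lemma lintegral_abs_mul_add_mul_cos_add_sin_le {s s' : ℝ} (hs : s ^ 2 + s' ^ 2 = 1) (b R : ℝ) :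
    ∫⁻ φ in Ioo (-Real.pi) Real.pi,
        ENNReal.ofReal |b * s + R * (s * Real.cos φ + s' * Real.sin φ)| ≤
      ∫⁻ φ in Ioo (-Real.pi) Real.pi, ENNReal.ofReal |b + R * Real.cos φ| := by
  have hpi : -Real.pi ≤ Real.pi := by linarith [Real.pi_pos]
  have hs_abs : |s| ≤ 1 := abs_le_one_iff_mul_self_le_one.mpr (by nlinarith [sq_nonneg s'])
  have hnorm : ‖(⟨s, s'⟩ : ℂ)‖ = 1 := by
    rw [Complex.norm_def, Complex.normSq_mk, ← sq, ← sq, hs, Real.sqrt_one]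
  have hrotate (φ : ℝ) :
      s * Real.cos φ + s' * Real.sin φ = Real.cos (φ - Complex.arg ⟨s, s'⟩) := by
    have hcos := Complex.norm_mul_cos_arg ⟨s, s'⟩
    have hsin := Complex.norm_mul_sin_arg ⟨s, s'⟩
    rw [hnorm, one_mul] at hcos hsin
    rw [Real.cos_sub, hcos, hsin]
    ring
  rw [lintegral_ofReal_Ioo_eq_intervalIntegral hpi
      (Continuous.intervalIntegrable (by fun_prop) _ _) fun φ _ => abs_nonneg _,
    lintegral_ofReal_Ioo_eq_intervalIntegral hpi
      (Continuous.intervalIntegrable (by fun_prop) _ _) fun φ _ => abs_nonneg _]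
  refine ENNReal.ofReal_le_ofReal ?_
  simp only [hrotate]
  rw [intervalIntegral_comp_cos_sub fun c => |b * s + R * c|]
  exact intervalIntegral_abs_mul_add_mul_cos_le hs_abs b R

end CircleAverage

section Pencil

/-- The radius of the circle with parameter `W` in the pencil
`1 - ‖z‖ ^ 2 = W * (1 + ρ ^ 2 - 2 * ρ * z.1)` of circles in the plane, which is centred at
`(ρ * W, 0)`. -/
noncomputable def pencilRadius (ρ W : ℝ) : ℝ := √((1 - W) * (1 - ρ ^ 2 * W))

/-- Coordinates `(W, φ)` on the unit disc: the point at angle `φ` on the circle with parameter `W`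
of the pencil. -/
noncomputable def pencilMap (ρ : ℝ) (p : ℝ × ℝ) : ℝ × ℝ :=
  (ρ * p.1 + pencilRadius ρ p.1 * Real.cos p.2, pencilRadius ρ p.1 * Real.sin p.2)

/-- The derivative of `pencilMap`. -/
noncomputable def fderivPencilMap (ρ : ℝ) (p : ℝ × ℝ) : ℝ × ℝ →L[ℝ] ℝ × ℝ :=
  let R' := -(1 + ρ ^ 2 - 2 * ρ ^ 2 * p.1) / (2 * pencilRadius ρ p.1)
  (Matrix.toLin (.finTwoProd ℝ) (.finTwoProd ℝ)
    !![ρ + R' * Real.cos p.2, -(pencilRadius ρ p.1 * Real.sin p.2);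
      R' * Real.sin p.2, pencilRadius ρ p.1 * Real.cos p.2]).toContinuousLinearMap

variable {ρ : ℝ} {p : ℝ × ℝ}

lemma pencilRadius_sq {W : ℝ} (hρ : ρ ^ 2 < 1) (hW : W < 1) :
    pencilRadius ρ W ^ 2 = (1 - W) * (1 - ρ ^ 2 * W) :=
  Real.sq_sqrt (mul_nonneg (by linarith) (by nlinarith))

lemma pencilRadius_pos {W : ℝ} (hρ : ρ ^ 2 < 1) (hW : W < 1) : 0 < pencilRadius ρ W :=
  Real.sqrt_pos.mpr (mul_pos (by linarith) (by nlinarith))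

lemma hasDerivAt_pencilRadius {W : ℝ} (hρ : ρ ^ 2 < 1) (hW : W < 1) :
    HasDerivAt (pencilRadius ρ)
      (-(1 + ρ ^ 2 - 2 * ρ ^ 2 * W) / (2 * pencilRadius ρ W)) W := by
  have hfactor (c : ℝ) : HasDerivAt (fun W : ℝ => 1 - c * W) (-c) W := by
    simpa using ((hasDerivAt_id W).const_mul c).const_sub 1
  have hprod : HasDerivAt (fun W => (1 - W) * (1 - ρ ^ 2 * W))
      (-(1 + ρ ^ 2 - 2 * ρ ^ 2 * W)) W := by
    have hmul := (hfactor 1).mul (hfactor (ρ ^ 2))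
    simp only [one_mul] at hmul
    refine hmul.congr_deriv ?_
    ring
  exact hprod.sqrt (Real.sqrt_pos.mp (pencilRadius_pos hρ hW)).ne'

lemma hasFDerivAt_pencilMap (hρ : ρ ^ 2 < 1) (hp : p.1 < 1) :
    HasFDerivAt (pencilMap ρ) (fderivPencilMap ρ p) p := by
  have hR := (hasDerivAt_pencilRadius hρ hp).comp_hasFDerivAt p
    (hasFDerivAt_fst (𝕜 := ℝ) (p := p))
  have hcos := (Real.hasDerivAt_cos p.2).comp_hasFDerivAt p
    (hasFDerivAt_snd (𝕜 := ℝ) (p := p))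
  have hsin := (Real.hasDerivAt_sin p.2).comp_hasFDerivAt p
    (hasFDerivAt_snd (𝕜 := ℝ) (p := p))
  simp only [fderivPencilMap, Matrix.toLin_finTwoProd_toContinuousLinearMap]
  refine (((hasFDerivAt_fst.const_mul ρ).add (hR.mul hcos)).prodMk
    (hR.mul hsin)).congr_fderiv ?_
  ext <;> simp <;> ring

lemma one_sub_norm_sq_pencilMap (hρ : ρ ^ 2 < 1) (hp : p.1 < 1) :
    1 - ((pencilMap ρ p).1 ^ 2 + (pencilMap ρ p).2 ^ 2) =
      p.1 * (1 + ρ ^ 2 - 2 * ρ * (pencilMap ρ p).1) := by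
  simp only [pencilMap]
  linear_combination (-1) * pencilRadius_sq hρ hp -
    pencilRadius ρ p.1 ^ 2 * Real.sin_sq_add_cos_sq p.2

lemma one_add_sq_sub_pencilMap_pos (hρ : ρ ^ 2 < 1) (hp : p.1 < 1) :
    0 < 1 + ρ ^ 2 - 2 * ρ * (pencilMap ρ p).1 := by
  have hcenter : 0 < 1 + ρ ^ 2 - 2 * ρ ^ 2 * p.1 := by nlinarith [sq_nonneg ρ]
  have hradius : |2 * ρ * (pencilRadius ρ p.1 * Real.cos p.2)| <
      1 + ρ ^ 2 - 2 * ρ ^ 2 * p.1 := by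
    refine abs_lt_of_sq_lt_sq ?_ hcenter.le
    calc (2 * ρ * (pencilRadius ρ p.1 * Real.cos p.2)) ^ 2
        = (2 * ρ * pencilRadius ρ p.1) ^ 2 * Real.cos p.2 ^ 2 := by ring
      _ ≤ (2 * ρ * pencilRadius ρ p.1) ^ 2 :=
          mul_le_of_le_one_right (sq_nonneg _) (Real.cos_sq_le_one _)
      _ = (1 + ρ ^ 2 - 2 * ρ ^ 2 * p.1) ^ 2 - (1 - ρ ^ 2) ^ 2 := by
          rw [mul_pow, pencilRadius_sq hρ hp]; ring
      _ < (1 + ρ ^ 2 - 2 * ρ ^ 2 * p.1) ^ 2 := by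
          linarith [pow_pos (sub_pos.mpr hρ) 2]
  have := (abs_lt.mp hradius).2
  simp only [pencilMap]
  linarith

lemma abs_det_fderivPencilMap (hρ : ρ ^ 2 < 1) (hp : p.1 < 1) :
    |(fderivPencilMap ρ p).det| = (1 + ρ ^ 2 - 2 * ρ * (pencilMap ρ p).1) / 2 := by
  have hR := pencilRadius_pos hρ hp
  have hdet : (fderivPencilMap ρ p).det =
      -((1 + ρ ^ 2 - 2 * ρ * (pencilMap ρ p).1) / 2) := by
    simp only [fderivPencilMap, pencilMap, LinearMap.det_toContinuousLinearMap,
      LinearMap.det_toLin, Matrix.det_fin_two_of]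
    field_simp
    linear_combination (-(1 + ρ ^ 2 - 2 * ρ ^ 2 * p.1)) * Real.sin_sq_add_cos_sq p.2
  rw [hdet, abs_neg, abs_of_pos (half_pos (one_add_sq_sub_pencilMap_pos hρ hp))]

lemma pencilMap_eq_add_polarCoord_symm (ρ : ℝ) (p : ℝ × ℝ) :
    pencilMap ρ p = (ρ * p.1, 0) + polarCoord.symm (pencilRadius ρ p.1, p.2) := by
  simp [pencilMap]

lemma injOn_pencilMap (hρ : ρ ^ 2 < 1) :
    InjOn (pencilMap ρ) (Ioo 0 1 ×ˢ Ioo (-Real.pi) Real.pi) := by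
  intro p hp p' hp' h
  have hW : p.1 = p'.1 := by
    have hnorm := one_sub_norm_sq_pencilMap hρ hp.1.2
    rw [h, one_sub_norm_sq_pencilMap hρ hp'.1.2] at hnorm
    exact (mul_right_cancel₀ (one_add_sq_sub_pencilMap_pos hρ hp'.1.2).ne' hnorm).symm
  have hpolar : (pencilRadius ρ p.1, p.2) = (pencilRadius ρ p'.1, p'.2) := by
    rw [pencilMap_eq_add_polarCoord_symm, pencilMap_eq_add_polarCoord_symm, hW] at h
    rw [hW]
    have htarget {φ : ℝ} (hφ : φ ∈ Ioo (-Real.pi) Real.pi) :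
        (pencilRadius ρ p'.1, φ) ∈ polarCoord.symm.source := ⟨pencilRadius_pos hρ hp'.1.2, hφ⟩
    exact polarCoord.symm.injOn (htarget hp.2) (htarget hp'.2) (add_left_cancel h)
  exact Prod.ext hW (Prod.mk.inj hpolar).2

lemma mem_image_pencilMap (ρ : ℝ) {z : ℝ × ℝ} (hz : z.1 ^ 2 + z.2 ^ 2 < 1)
    (hz2 : z.2 ≠ 0) : z ∈ pencilMap ρ '' (Ioo 0 1 ×ˢ Ioo (-Real.pi) Real.pi) := by
  have hz2_sq : 0 < z.2 ^ 2 := by positivity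
  have hq : 0 < 1 + ρ ^ 2 - 2 * ρ * z.1 := by nlinarith [sq_nonneg (ρ - z.1)]
  set W := (1 - (z.1 ^ 2 + z.2 ^ 2)) / (1 + ρ ^ 2 - 2 * ρ * z.1)
  have hW : W ∈ Ioo 0 1 :=
    ⟨div_pos (by linarith) hq, (div_lt_one hq).mpr (by nlinarith [sq_nonneg (z.1 - ρ)])⟩
  have hWq : W * (1 + ρ ^ 2 - 2 * ρ * z.1) = 1 - (z.1 ^ 2 + z.2 ^ 2) := div_mul_cancel₀ _ hq.ne'
  have hsource : z - (ρ * W, 0) ∈ polarCoord.source := Or.inr (by simpa using hz2)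
  have hradius : (polarCoord (z - (ρ * W, 0))).1 = pencilRadius ρ W := by
    simp only [polarCoord_apply, Prod.fst_sub, Prod.snd_sub, sub_zero, pencilRadius]
    congr 1
    linear_combination hWq
  refine ⟨(W, (polarCoord (z - (ρ * W, 0))).2), ⟨hW, (polarCoord.map_source hsource).2⟩, ?_⟩
  rw [pencilMap_eq_add_polarCoord_symm]
  simp only [← hradius, Prod.mk.eta, polarCoord.left_inv hsource, add_sub_cancel]

lemma image_pencilMap_ae_eq_disc (hρ : ρ ^ 2 < 1) :
    pencilMap ρ '' (Ioo 0 1 ×ˢ Ioo (-Real.pi) Real.pi) =ᵐ[volume]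
      {z : ℝ × ℝ | z.1 ^ 2 + z.2 ^ 2 < 1} := by
  have hae : ∀ᵐ z : ℝ × ℝ, z.2 ≠ 0 := by
    have hnull : {z : ℝ × ℝ | ¬z.2 ≠ 0} = univ ×ˢ {0} := by ext; simp
    rw [ae_iff, hnull, Measure.volume_eq_prod, Measure.prod_prod, Real.volume_singleton, mul_zero]
  filter_upwards [hae] with z hz
  refine propext ⟨?_, fun h => mem_image_pencilMap ρ h hz⟩
  rintro ⟨p, hp, rfl⟩
  have := mul_pos hp.1.1 (one_add_sq_sub_pencilMap_pos hρ hp.1.2)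
  rw [← one_sub_norm_sq_pencilMap hρ hp.1.2] at this
  exact sub_pos.mp this

lemma lintegral_disc_eq_lintegral_pencilMap (hρ : ρ ^ 2 < 1) (f : ℝ × ℝ → ENNReal) :
    ∫⁻ z in {z : ℝ × ℝ | z.1 ^ 2 + z.2 ^ 2 < 1}, f z =
      ∫⁻ p in Ioo 0 1 ×ˢ Ioo (-Real.pi) Real.pi,
        ENNReal.ofReal ((1 + ρ ^ 2 - 2 * ρ * (pencilMap ρ p).1) / 2) * f (pencilMap ρ p) := by
  have hmeas : MeasurableSet (Ioo (0 : ℝ) 1 ×ˢ Ioo (-Real.pi) Real.pi) :=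
    measurableSet_Ioo.prod measurableSet_Ioo
  rw [← setLIntegral_congr (image_pencilMap_ae_eq_disc hρ),
    lintegral_image_eq_lintegral_abs_det_fderiv_mul volume hmeas
      (fun p hp => (hasFDerivAt_pencilMap hρ hp.1.2).hasFDerivWithinAt) (injOn_pencilMap hρ)]
  refine setLIntegral_congr_fun hmeas fun p hp => ?_
  simp only [abs_det_fderivPencilMap hρ hp.1.2]

/-- The integral over the unit disc, with respect to the projection to a plane of the surface
measure of the sphere in dimension `N`, of `|s * z.1 + s' * z.2 - κ * ρ * s|` against the weight
`(1 + ρ ^ 2 - 2 * ρ * z.1) ^ ((2 - N) / 2)`. -/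
noncomputable def discIntegral (N κ ρ s s' : ℝ) : ENNReal :=
  ∫⁻ z in {z : ℝ × ℝ | z.1 ^ 2 + z.2 ^ 2 < 1}, ENNReal.ofReal
    (|s * z.1 + s' * z.2 - κ * ρ * s| * (1 - (z.1 ^ 2 + z.2 ^ 2)) ^ ((N - 4) / 2) *
      (1 + ρ ^ 2 - 2 * ρ * z.1) ^ ((2 - N) / 2))

-- With the Jacobian, the powers of `1 + ρ ^ 2 - 2 * ρ * z.1` cancel: in the coordinates `(W, φ)`
-- the weight depends on `W` only.
lemma pencilMap_weight_eq (hρ : ρ ^ 2 < 1) (hp : p.1 ∈ Ioo 0 1) (N κ s s' : ℝ) :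
    (1 + ρ ^ 2 - 2 * ρ * (pencilMap ρ p).1) / 2 *
        (|s * (pencilMap ρ p).1 + s' * (pencilMap ρ p).2 - κ * ρ * s| *
          (1 - ((pencilMap ρ p).1 ^ 2 + (pencilMap ρ p).2 ^ 2)) ^ ((N - 4) / 2) *
          (1 + ρ ^ 2 - 2 * ρ * (pencilMap ρ p).1) ^ ((2 - N) / 2)) =
      p.1 ^ ((N - 4) / 2) / 2 *
        |ρ * (p.1 - κ) * s +
          pencilRadius ρ p.1 * (s * Real.cos p.2 + s' * Real.sin p.2)| := by
  have hq := one_add_sq_sub_pencilMap_pos hρ hp.2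
  have hlinear : s * (pencilMap ρ p).1 + s' * (pencilMap ρ p).2 - κ * ρ * s =
      ρ * (p.1 - κ) * s + pencilRadius ρ p.1 * (s * Real.cos p.2 + s' * Real.sin p.2) := by
    simp only [pencilMap]; ring
  rw [one_sub_norm_sq_pencilMap hρ hp.2, hlinear, Real.mul_rpow hp.1.le hq.le]
  generalize 1 + ρ ^ 2 - 2 * ρ * (pencilMap ρ p).1 = q at hq
  have hcancel : q ^ ((N - 4) / 2) * q ^ ((2 - N) / 2) * q = 1 := by
    rw [← Real.rpow_add hq, ← Real.rpow_add_one hq.ne',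
      show (N - 4) / 2 + (2 - N) / 2 + 1 = 0 by ring, Real.rpow_zero]
  linear_combination (|ρ * (p.1 - κ) * s +
    pencilRadius ρ p.1 * (s * Real.cos p.2 + s' * Real.sin p.2)| *
      p.1 ^ ((N - 4) / 2) / 2) * hcancel

lemma discIntegral_eq_lintegral_circles (hρ : ρ ^ 2 < 1) (N κ s s' : ℝ) :
    discIntegral N κ ρ s s' =
      ∫⁻ W in Ioo 0 1, ENNReal.ofReal (W ^ ((N - 4) / 2) / 2) *
        ∫⁻ φ in Ioo (-Real.pi) Real.pi, ENNReal.ofReal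
          |ρ * (W - κ) * s + pencilRadius ρ W * (s * Real.cos φ + s' * Real.sin φ)| := by
  have hmeas : Measurable (pencilRadius ρ) := by unfold pencilRadius; fun_prop
  calc discIntegral N κ ρ s s'
      = ∫⁻ p in Ioo 0 1 ×ˢ Ioo (-Real.pi) Real.pi, ENNReal.ofReal (p.1 ^ ((N - 4) / 2) / 2) *
          ENNReal.ofReal |ρ * (p.1 - κ) * s +
            pencilRadius ρ p.1 * (s * Real.cos p.2 + s' * Real.sin p.2)| := by
        rw [discIntegral, lintegral_disc_eq_lintegral_pencilMap hρ]
        refine setLIntegral_congr_fun (measurableSet_Ioo.prod measurableSet_Ioo) fun p hp => ?_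
        have hq := one_add_sq_sub_pencilMap_pos hρ hp.1.2
        have hW : 0 < p.1 := hp.1.1
        rw [← ENNReal.ofReal_mul (by positivity), ← ENNReal.ofReal_mul (by positivity),
          pencilMap_weight_eq hρ hp.1]
    _ = _ := by
        rw [Measure.volume_eq_prod, setLIntegral_prod _ (Measurable.aemeasurable (by fun_prop))]
        refine setLIntegral_congr_fun measurableSet_Ioo fun W _ => ?_
        dsimp only
        rw [lintegral_const_mul _ (by fun_prop)]

theorem discIntegral_le {s s' : ℝ} (hρ : ρ ^ 2 < 1) (hs : s ^ 2 + s' ^ 2 = 1) (N κ : ℝ) :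
    discIntegral N κ ρ s s' ≤ discIntegral N κ ρ 1 0 := by
  rw [discIntegral_eq_lintegral_circles hρ, discIntegral_eq_lintegral_circles hρ]
  refine lintegral_mono fun W => mul_le_mul_right ?_ _
  simpa using lintegral_abs_mul_add_mul_cos_add_sin_le hs (ρ * (W - κ)) (pencilRadius ρ W)

end Pencil

section Projection

lemma lintegral_fun_norm {V : Type*} [NormedAddCommGroup V] [NormedSpace ℝ V]
    [FiniteDimensional ℝ V] [Nontrivial V] [MeasurableSpace V] [BorelSpace V] (μ : Measure V)
    [μ.IsAddHaarMeasure] {f : ℝ → ENNReal} (hf : Measurable f) :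
    ∫⁻ w, f ‖w‖ ∂μ = μ.toSphere univ *
      ∫⁻ r in Ioi 0, ENNReal.ofReal (r ^ (finrank ℝ V - 1)) * f r := by
  have hpolar : ∫⁻ w, f ‖w‖ ∂μ =
      ∫⁻ q, f q.2 ∂μ.toSphere.prod (.volumeIoiPow (finrank ℝ V - 1)) := by
    rw [← μ.measurePreserving_homeomorphUnitSphereProd.lintegral_comp_emb
      (Homeomorph.measurableEmbedding _), ← restrict_compl_singleton (μ := μ) (0 : V),
      ← lintegral_subtype_comap (measurableSet_singleton (0 : V)).compl]
    simp
  rw [hpolar, lintegral_prod _ (Measurable.aemeasurable (by fun_prop))]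
  dsimp only
  rw [lintegral_const, mul_comm,
    Measure.volumeIoiPow, lintegral_withDensity_eq_lintegral_mul _ (by fun_prop) (by fun_prop)]
  exact congrArg _ (lintegral_subtype_comap measurableSet_Ioi
    fun r => ENNReal.ofReal (r ^ (finrank ℝ V - 1)) * f r)

lemma lintegral_Ioi_eq_lintegral_comp_sq (f : ℝ → ENNReal) :
    ∫⁻ s in Ioi 0, f s = ∫⁻ r in Ioi 0, ENNReal.ofReal (2 * r) * f (r ^ 2) := by
  have himage : (fun r : ℝ => r ^ 2) '' Ioi 0 = Ioi 0 := by
    refine Subset.antisymm (image_subset_iff.mpr fun r hr => pow_pos (mem_Ioi.mp hr) 2)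
      fun s hs => ⟨√s, Real.sqrt_pos.mpr hs, Real.sq_sqrt hs.le⟩
  have hinj : InjOn (fun r : ℝ => r ^ 2) (Ioi 0) := fun r hr t ht h =>
    (pow_left_inj₀ (mem_Ioi.mp hr).le (mem_Ioi.mp ht).le two_ne_zero).mp h
  rw [← himage, lintegral_image_eq_lintegral_abs_deriv_mul measurableSet_Ioi
    (fun r _ => (hasDerivAt_pow 2 r).hasDerivWithinAt) hinj, himage]
  refine setLIntegral_congr_fun measurableSet_Ioi fun r hr => ?_
  have hr0 : 0 < r := hr
  simp only [Nat.cast_ofNat, Nat.add_one_sub_one, pow_one, abs_of_pos (mul_pos two_pos hr0)]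

lemma lintegral_fun_norm_sq {V : Type*} [NormedAddCommGroup V] [NormedSpace ℝ V]
    [FiniteDimensional ℝ V] [Nontrivial V] [MeasurableSpace V] [BorelSpace V] (μ : Measure V)
    [μ.IsAddHaarMeasure] {f : ℝ → ENNReal} (hf : Measurable f) :
    ∫⁻ w, f (‖w‖ ^ 2) ∂μ = μ.toSphere univ *
      ∫⁻ s in Ioi 0, ENNReal.ofReal (s ^ ((finrank ℝ V - 2 : ℝ) / 2) / 2) * f s := by
  rw [lintegral_fun_norm μ (f := fun r => f (r ^ 2)) (by fun_prop),
    lintegral_Ioi_eq_lintegral_comp_sq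
      fun s => ENNReal.ofReal (s ^ ((finrank ℝ V - 2 : ℝ) / 2) / 2) * f s]
  congr 1
  refine setLIntegral_congr_fun measurableSet_Ioi fun r hr => ?_
  have hr0 : 0 < r := hr
  have hpow : (r ^ 2) ^ ((finrank ℝ V - 2 : ℝ) / 2) * r = r ^ (finrank ℝ V - 1) := by
    rw [← Real.rpow_natCast_mul hr0.le, ← Real.rpow_add_one hr0.ne', ← Real.rpow_natCast,
      Nat.cast_sub finrank_pos]
    congr 1
    push_cast
    ring
  rw [← mul_assoc, ← ENNReal.ofReal_mul (by positivity), ← hpow]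
  congr 2
  ring

lemma lintegral_fun_add_norm_sq {V : Type*} [NormedAddCommGroup V] [NormedSpace ℝ V]
    [FiniteDimensional ℝ V] [Nontrivial V] [MeasurableSpace V] [BorelSpace V] (μ : Measure V)
    [μ.IsAddHaarMeasure] {f : ℝ → ENNReal} (hf : Measurable f) (q : ℝ) :
    ∫⁻ w, f (q + ‖w‖ ^ 2) ∂μ = μ.toSphere univ *
      ∫⁻ σ in Ioi q, ENNReal.ofReal ((σ - q) ^ ((finrank ℝ V - 2 : ℝ) / 2) / 2) * f σ := by
  rw [lintegral_fun_norm_sq μ (f := fun s => f (q + s)) (by fun_prop),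
    ← (measurePreserving_add_left volume q).setLIntegral_comp_preimage_emb
      (measurableEmbedding_addLeft q)
      fun σ => ENNReal.ofReal ((σ - q) ^ ((finrank ℝ V - 2 : ℝ) / 2) / 2) * f σ]
  simp only [preimage_const_add_Ioi, sub_self, add_sub_cancel_left]

lemma lintegral_eq_mul_lintegral_comp_smul {V : Type*} [NormedAddCommGroup V] [NormedSpace ℝ V]
    [FiniteDimensional ℝ V] [MeasurableSpace V] [BorelSpace V] (μ : Measure V)
    [μ.IsAddHaarMeasure] {τ : ℝ} (hτ : 0 < τ) (f : V → ENNReal) :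
    ∫⁻ z, f z ∂μ = ENNReal.ofReal (τ ^ finrank ℝ V) * ∫⁻ z, f (τ • z) ∂μ := by
  have hmap : ∫⁻ z, f z ∂(μ.map (τ • ·)) = ∫⁻ z, f (τ • z) ∂μ :=
    (Homeomorph.smulOfNeZero τ hτ.ne').measurableEmbedding.lintegral_map f
  rw [← hmap, Measure.map_addHaar_smul μ hτ.ne', lintegral_smul_measure, smul_eq_mul, ← mul_assoc,
    ← ENNReal.ofReal_mul (by positivity), abs_of_pos (by positivity),
    mul_inv_cancel₀ (by positivity), ENNReal.ofReal_one, one_mul]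

variable {E : Type*} [NormedAddCommGroup E] [InnerProductSpace ℝ E] [FiniteDimensional ℝ E]
  {d k : ℕ}

lemma exists_orthonormalBasis_sum {v : Fin d → E} (hE : finrank ℝ E = d + k)
    (hv : Orthonormal ℝ v) :
    ∃ b : OrthonormalBasis (Fin d ⊕ Fin k) ℝ E, ∀ i, b (Sum.inl i) = v i := by
  have hrestrict : Orthonormal ℝ
      ((range (Sum.inl : Fin d → Fin d ⊕ Fin k)).domRestrict (Sum.elim v 0)) := by
    convert hv.comp _ (Equiv.ofInjective (Sum.inl : Fin d → Fin d ⊕ Fin k)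
      Sum.inl_injective).symm.injective using 1
    ext1 ⟨_, i, rfl⟩
    simp [domRestrict]
  obtain ⟨b, hb⟩ := hrestrict.exists_orthonormalBasis_extension_of_card_eq (by simp [hE])
  exact ⟨b, fun i => hb (Sum.inl i) ⟨i, rfl⟩⟩

variable [MeasurableSpace E] [BorelSpace E]

lemma lintegral_inner_norm_sq_eq_lintegral_lintegral {v : Fin d → E}
    (hE : finrank ℝ E = d + k) (hv : Orthonormal ℝ v) {G : (Fin d → ℝ) × ℝ → ENNReal}
    (hG : Measurable G) :
    ∫⁻ y : E, G (fun i => ⟪v i, y⟫, ‖y‖ ^ 2) =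
      ∫⁻ z, ∫⁻ w : EuclideanSpace ℝ (Fin k), G (z, ∑ i, z i ^ 2 + ‖w‖ ^ 2) := by
  obtain ⟨b, hb⟩ := exists_orthonormalBasis_sum hE hv
  let G' (q : (Fin d → ℝ) × (Fin k → ℝ)) : ENNReal := G (q.1, ∑ i, q.1 i ^ 2 + ∑ j, q.2 j ^ 2)
  have hG' : Measurable G' := by fun_prop
  have hcoord (y : E) : G (fun i => ⟪v i, y⟫, ‖y‖ ^ 2) =
      G' (MeasurableEquiv.sumPiEquivProdPi (fun _ => ℝ) (WithLp.ofLp (b.repr y))) := by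
    have hnorm : ‖y‖ ^ 2 =
        ∑ i, b.repr y (Sum.inl i) ^ 2 + ∑ j, b.repr y (Sum.inr j) ^ 2 := by
      rw [← b.repr.norm_map y, EuclideanSpace.real_norm_sq_eq, Fintype.sum_sum_type]
    simp only [hnorm, ← hb, ← b.repr_apply_apply]
    rfl
  have hmeasure := ((volume_measurePreserving_sumPiEquivProdPi fun _ : Fin d ⊕ Fin k => ℝ).comp
    (PiLp.volume_preserving_ofLp (Fin d ⊕ Fin k))).comp b.measurePreserving_repr
  simp only [hcoord]
  refine (hmeasure.lintegral_comp hG').trans ?_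
  rw [Measure.volume_eq_prod, lintegral_prod _ hG'.aemeasurable]
  refine lintegral_congr fun z => ?_
  rw [← (PiLp.volume_preserving_ofLp (Fin k)).lintegral_comp (by fun_prop)]
  simp only [G', EuclideanSpace.real_norm_sq_eq]

lemma setLIntegral_sum_sq_lt_eq {σ : ℝ} (hσ : 0 < σ) (κ : ℝ) (f : (Fin d → ℝ) → ENNReal) :
    ∫⁻ z in {z | ∑ i, z i ^ 2 < σ}, ENNReal.ofReal ((σ - ∑ i, z i ^ 2) ^ κ / 2) * f z =
      ENNReal.ofReal (σ ^ ((d : ℝ) / 2 + κ) / 2) *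
        ∫⁻ z in {z | ∑ i, z i ^ 2 < 1}, ENNReal.ofReal ((1 - ∑ i, z i ^ 2) ^ κ) * f (√σ • z) := by
  have hmeas (r : ℝ) : MeasurableSet {z : Fin d → ℝ | ∑ i, z i ^ 2 < r} :=
    measurableSet_lt (by fun_prop) (by fun_prop)
  have hscale (z : Fin d → ℝ) : ∑ i, (√σ • z) i ^ 2 = σ * ∑ i, z i ^ 2 := by
    simp only [Pi.smul_apply, smul_eq_mul, mul_pow, Real.sq_sqrt hσ.le, Finset.mul_sum]
  have hpow : σ ^ ((d : ℝ) / 2 + κ) = √σ ^ d * σ ^ κ := by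
    rw [Real.rpow_add hσ, Real.sqrt_eq_rpow, ← Real.rpow_mul_natCast hσ.le]
    ring_nf
  rw [← lintegral_indicator (hmeas σ), ← lintegral_indicator (hmeas 1),
    lintegral_eq_mul_lintegral_comp_smul volume (Real.sqrt_pos.mpr hσ), finrank_fin_fun, hpow,
    mul_div_assoc, ENNReal.ofReal_mul (by positivity), mul_assoc,
    ← lintegral_const_mul' (ENNReal.ofReal (σ ^ κ / 2)) _ ENNReal.ofReal_ne_top]
  congr 1
  refine lintegral_congr fun z => ?_
  have hlt : σ * ∑ i, z i ^ 2 < σ ↔ ∑ i, z i ^ 2 < 1 := mul_lt_iff_lt_one_right hσ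
  by_cases hz : ∑ i, z i ^ 2 < 1
  · simp only [indicator, mem_ofPred_eq, hscale, hlt, hz, if_true]
    rw [← mul_assoc, ← ENNReal.ofReal_mul (by positivity),
      show σ - σ * ∑ i, z i ^ 2 = σ * (1 - ∑ i, z i ^ 2) by ring,
      Real.mul_rpow hσ.le (by linarith)]
    congr 2
    ring
  · simp only [indicator, mem_ofPred_eq, hscale, hlt, hz, if_false, mul_zero]

theorem lintegral_inner_norm_sq_eq {v : Fin d → E} (hE : finrank ℝ E = d + k) (hk : 0 < k)
    (hv : Orthonormal ℝ v) {G : (Fin d → ℝ) × ℝ → ENNReal} (hG : Measurable G) :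
    ∫⁻ y : E, G (fun i => ⟪v i, y⟫, ‖y‖ ^ 2) =
      (volume : Measure (EuclideanSpace ℝ (Fin k))).toSphere univ *
        ∫⁻ σ in Ioi 0, ENNReal.ofReal (σ ^ ((finrank ℝ E - 2 : ℝ) / 2) / 2) *
          ∫⁻ z in {z | ∑ i, z i ^ 2 < 1},
            ENNReal.ofReal ((1 - ∑ i, z i ^ 2) ^ ((k - 2 : ℝ) / 2)) * G (√σ • z, σ) := by
  have : Nonempty (Fin k) := ⟨⟨0, hk⟩⟩
  let H : (Fin d → ℝ) × ℝ → ENNReal := {q | ∑ i, q.1 i ^ 2 < q.2}.indicator fun q =>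
    ENNReal.ofReal ((q.2 - ∑ i, q.1 i ^ 2) ^ ((k - 2 : ℝ) / 2) / 2) * G q
  have hH : Measurable H :=
    Measurable.indicator (by fun_prop) (measurableSet_lt (by fun_prop) (by fun_prop))
  have hfibre (z : Fin d → ℝ) :
      ∫⁻ w : EuclideanSpace ℝ (Fin k), G (z, ∑ i, z i ^ 2 + ‖w‖ ^ 2) =
        (volume : Measure (EuclideanSpace ℝ (Fin k))).toSphere univ *
          ∫⁻ σ in Ioi 0, H (z, σ) := by
    have hIoi : Ioi (∑ i, z i ^ 2) ∩ Ioi 0 = Ioi (∑ i, z i ^ 2) :=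
      inter_eq_left.mpr (Ioi_subset_Ioi (Finset.sum_nonneg fun i _ => sq_nonneg (z i)))
    rw [lintegral_fun_add_norm_sq volume (f := fun σ => G (z, σ)) (by fun_prop),
      finrank_euclideanSpace_fin, ← hIoi, ← setLIntegral_indicator measurableSet_Ioi]
    rfl
  rw [lintegral_inner_norm_sq_eq_lintegral_lintegral hE hv hG]
  simp only [hfibre]
  rw [lintegral_const_mul' _ _ (measure_ne_top _ _),
    lintegral_lintegral_swap (f := fun z σ => H (z, σ)) hH.aemeasurable]
  congr 1
  refine setLIntegral_congr_fun measurableSet_Ioi fun σ hσ => ?_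
  have hslice : ∫⁻ z, H (z, σ) = ∫⁻ z in {z : Fin d → ℝ | ∑ i, z i ^ 2 < σ},
      ENNReal.ofReal ((σ - ∑ i, z i ^ 2) ^ ((k - 2 : ℝ) / 2) / 2) * G (z, σ) :=
    lintegral_indicator (measurableSet_lt (by fun_prop) (by fun_prop)) _
  have hexp : (finrank ℝ E - 2 : ℝ) / 2 = d / 2 + (k - 2) / 2 := by
    rw [hE]; push_cast; ring
  rw [hslice, setLIntegral_sum_sq_lt_eq hσ _ fun z => G (z, σ), hexp]

theorem lintegral_inner_norm_sq_eq_of_norm_eq_one {e : E} (hE : finrank ℝ E = 1 + k) (hk : 0 < k)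
    (he : ‖e‖ = 1) {G : ℝ × ℝ → ENNReal} (hG : Measurable G) :
    ∫⁻ y : E, G (⟪e, y⟫, ‖y‖ ^ 2) =
      (volume : Measure (EuclideanSpace ℝ (Fin k))).toSphere univ *
        ∫⁻ σ in Ioi 0, ENNReal.ofReal (σ ^ ((finrank ℝ E - 2 : ℝ) / 2) / 2) *
          ∫⁻ t in {t | t ^ 2 < 1},
            ENNReal.ofReal ((1 - t ^ 2) ^ ((finrank ℝ E - 3 : ℝ) / 2)) * G (√σ * t, σ) := by
  have horth : Orthonormal ℝ fun _ : Fin 1 => e :=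
    ⟨fun _ => he, fun _ _ hij => absurd (Subsingleton.elim _ _) hij⟩
  have hexp : (k - 2 : ℝ) / 2 = (finrank ℝ E - 3 : ℝ) / 2 := by rw [hE]; push_cast; ring
  rw [lintegral_inner_norm_sq_eq hE hk horth (G := fun q => G (q.1 0, q.2)) (by fun_prop), hexp]
  congr 1
  refine lintegral_congr fun σ => ?_
  rw [← (volume_preserving_funUnique (Fin 1) ℝ).setLIntegral_comp_preimage_emb
    (MeasurableEquiv.measurableEmbedding _)]
  simp only [Finset.univ_unique, Fin.default_eq_zero, Fin.isValue, Finset.sum_singleton,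
    Pi.smul_apply, smul_eq_mul, MeasurableEquiv.funUnique, MeasurableEquiv.piUnique_apply,
    preimage_ofPred_eq]
  rfl

theorem lintegral_inner_inner_norm_sq_eq {e m : E} (hE : finrank ℝ E = 2 + k) (hk : 0 < k)
    (he : ‖e‖ = 1) (hm : ‖m‖ = 1) (hem : ⟪e, m⟫ = 0) {G : (ℝ × ℝ) × ℝ → ENNReal}
    (hG : Measurable G) :
    ∫⁻ y : E, G ((⟪e, y⟫, ⟪m, y⟫), ‖y‖ ^ 2) =
      (volume : Measure (EuclideanSpace ℝ (Fin k))).toSphere univ *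
        ∫⁻ σ in Ioi 0, ENNReal.ofReal (σ ^ ((finrank ℝ E - 2 : ℝ) / 2) / 2) *
          ∫⁻ z in {z : ℝ × ℝ | z.1 ^ 2 + z.2 ^ 2 < 1},
            ENNReal.ofReal ((1 - (z.1 ^ 2 + z.2 ^ 2)) ^ ((finrank ℝ E - 4 : ℝ) / 2)) *
              G ((√σ * z.1, √σ * z.2), σ) := by
  have horth : Orthonormal ℝ ![e, m] := by
    simp [he, hm, hem]
  have hexp : (k - 2 : ℝ) / 2 = (finrank ℝ E - 4 : ℝ) / 2 := by rw [hE]; push_cast; ring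
  refine (lintegral_inner_norm_sq_eq hE hk horth (G := fun q => G ((q.1 0, q.1 1), q.2))
    (by fun_prop)).trans ?_
  rw [hexp]
  congr 1
  refine lintegral_congr fun σ => ?_
  rw [← (volume_preserving_finTwoArrow ℝ).setLIntegral_comp_preimage_emb
    (MeasurableEquiv.measurableEmbedding _)]
  simp [MeasurableEquiv.finTwoArrow]

end Projection

section DirectionalIntegral

variable {E : Type*} [NormedAddCommGroup E] [InnerProductSpace ℝ E] [FiniteDimensional ℝ E]
  [MeasurableSpace E] [BorelSpace E] {h : ℝ → ℝ}

/-- The integral, with radial weight `h (‖y‖ ^ 2)`, that bounds the `ℓ`-th derivative at `x` of a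
harmonic function bounded by one on the unit ball, once `x` has been moved to the origin by
inversion. -/
noncomputable def directionalIntegral (h : ℝ → ℝ) (x ℓ : E) : ENNReal :=
  ∫⁻ y : E, ENNReal.ofReal (h (‖y‖ ^ 2) *
    |finrank ℝ E * ⟪y, ℓ⟫ - (finrank ℝ E - 2) * ⟪x, ℓ⟫ * ‖y‖ ^ 2| *
      (1 - 2 * ⟪x, y⟫ + ‖x‖ ^ 2 * ‖y‖ ^ 2) ^ ((2 - finrank ℝ E : ℝ) / 2))

lemma directionalIntegrand_slice {N ρ σ z₁ z₂ : ℝ} (hN : 0 < N) (hσ : 0 ≤ σ)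
    (h s s' : ℝ) :
    h * |N * (s * (√σ * z₁) + s' * (√σ * z₂)) - (N - 2) * (ρ * s) * σ| *
        (1 - 2 * (ρ * (√σ * z₁)) + ρ ^ 2 * σ) ^ ((2 - N) / 2) =
      h * N * √σ * (|s * z₁ + s' * z₂ - (N - 2) / N * (ρ * √σ) * s| *
        (1 + (ρ * √σ) ^ 2 - 2 * (ρ * √σ) * z₁) ^ ((2 - N) / 2)) := by
  have hsq : √σ ^ 2 = σ := Real.sq_sqrt hσ
  have habs : N * (s * (√σ * z₁) + s' * (√σ * z₂)) - (N - 2) * (ρ * s) * σ =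
      N * √σ * (s * z₁ + s' * z₂ - (N - 2) / N * (ρ * √σ) * s) := by
    field_simp
    linear_combination (s * (N - 2) * ρ) * hsq
  have hker : 1 - 2 * (ρ * (√σ * z₁)) + ρ ^ 2 * σ =
      1 + (ρ * √σ) ^ 2 - 2 * (ρ * √σ) * z₁ := by
    rw [mul_pow, hsq]
    ring
  rw [habs, hker, abs_mul, abs_of_nonneg (by positivity : 0 ≤ N * √σ)]
  ring

lemma directionalIntegral_eq_lintegral_discIntegral (hh : Continuous h) (hh0 : 0 ≤ h)
    (hE : 3 ≤ finrank ℝ E) {e m : E} (he : ‖e‖ = 1) (hm : ‖m‖ = 1) (hem : ⟪e, m⟫ = 0)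
    (ρ s s' : ℝ) :
    directionalIntegral h (ρ • e) (s • e + s' • m) =
      (volume : Measure (EuclideanSpace ℝ (Fin (finrank ℝ E - 2)))).toSphere univ *
        ∫⁻ σ in Ioi 0, ENNReal.ofReal (σ ^ ((finrank ℝ E - 2 : ℝ) / 2) / 2) *
          (ENNReal.ofReal (h σ * finrank ℝ E * √σ) *
            discIntegral (finrank ℝ E) ((finrank ℝ E - 2) / finrank ℝ E) (ρ * √σ) s s') := by
  have hN : (0 : ℝ) < finrank ℝ E := by exact_mod_cast (by lia : 0 < finrank ℝ E)
  let G : (ℝ × ℝ) × ℝ → ENNReal := fun q => ENNReal.ofReal (h q.2 *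
    |finrank ℝ E * (s * q.1.1 + s' * q.1.2) - (finrank ℝ E - 2) * (ρ * s) * q.2| *
      (1 - 2 * (ρ * q.1.1) + ρ ^ 2 * q.2) ^ ((2 - finrank ℝ E : ℝ) / 2))
  have hG : Measurable G := by
    have := hh.measurable
    fun_prop
  have hcoord : directionalIntegral h (ρ • e) (s • e + s' • m) =
      ∫⁻ y : E, G ((⟪e, y⟫, ⟪m, y⟫), ‖y‖ ^ 2) := by
    refine lintegral_congr fun y => ?_
    simp only [G, inner_add_right, inner_smul_left, inner_smul_right, hem, norm_smul, he,
      real_inner_self_eq_norm_sq, real_inner_comm y, Real.norm_eq_abs, sq_abs,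
      RCLike.conj_to_real, one_pow, mul_one, mul_zero, add_zero]
    rw [mul_comm s ρ]
  rw [hcoord, lintegral_inner_inner_norm_sq_eq (k := finrank ℝ E - 2) (by lia) (by lia)
    he hm hem hG]
  congr 1
  refine setLIntegral_congr_fun measurableSet_Ioi fun σ hσ => ?_
  have hσ0 : 0 ≤ σ := (mem_Ioi.mp hσ).le
  congr 1
  rw [discIntegral, ← lintegral_const_mul' _ _ ENNReal.ofReal_ne_top]
  refine setLIntegral_congr_fun (measurableSet_lt (by fun_prop) (by fun_prop)) fun z hz => ?_
  have hz' : 0 ≤ 1 - (z.1 ^ 2 + z.2 ^ 2) := sub_nonneg.mpr (le_of_lt hz)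
  have hhσ := hh0 σ
  rw [← ENNReal.ofReal_mul (by positivity),
    ← ENNReal.ofReal_mul (mul_nonneg (mul_nonneg hhσ hN.le) (by positivity)),
    directionalIntegrand_slice hN hσ0]
  congr 1
  ring

lemma exists_norm_eq_one_eq_smul {V : Type*} [NormedAddCommGroup V] [NormedSpace ℝ V]
    [Nontrivial V] (v : V) : ∃ m : V, ‖m‖ = 1 ∧ v = ‖v‖ • m := by
  rcases eq_or_ne v 0 with rfl | hv
  · obtain ⟨m, hm⟩ := exists_norm_eq V zero_le_one
    exact ⟨m, hm, by simp⟩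
  · exact ⟨‖v‖⁻¹ • v, norm_smul_inv_norm hv, by
      rw [smul_inv_smul₀ (norm_ne_zero_iff.mpr hv)]⟩

lemma exists_unit_orthogonal_decomposition {V : Type*} [NormedAddCommGroup V]
    [InnerProductSpace ℝ V] [FiniteDimensional ℝ V] (hV : 2 ≤ finrank ℝ V) {e ℓ : V}
    (he : ‖e‖ = 1) (hℓ : ‖ℓ‖ = 1) :
    ∃ (m : V) (s s' : ℝ), ‖m‖ = 1 ∧ ⟪e, m⟫ = 0 ∧ s ^ 2 + s' ^ 2 = 1 ∧ ℓ = s • e + s' • m := by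
  have : Nontrivial (ℝ ∙ e)ᗮ := by
    rw [← finrank_pos_iff (R := ℝ)]
    have hsum := (ℝ ∙ e).finrank_add_finrank_orthogonal
    rw [finrank_span_singleton (ne_zero_of_norm_ne_zero (he ▸ one_ne_zero))] at hsum
    lia
  have horth : ℓ - ⟪e, ℓ⟫ • e ∈ (ℝ ∙ e)ᗮ := by
    rw [Submodule.mem_orthogonal_singleton_iff_inner_right, inner_sub_right, inner_smul_right,
      real_inner_self_eq_norm_sq, he, one_pow, mul_one, sub_self]
  obtain ⟨⟨m, hme⟩, hm, hsmul⟩ := exists_norm_eq_one_eq_smul (⟨_, horth⟩ : (ℝ ∙ e)ᗮ)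
  have hem : ⟪e, m⟫ = 0 := Submodule.mem_orthogonal_singleton_iff_inner_right.mp hme
  generalize ‖(⟨_, horth⟩ : (ℝ ∙ e)ᗮ)‖ = s' at hsmul
  have hdecomp : ℓ - ⟪e, ℓ⟫ • e = s' • m := congrArg Subtype.val hsmul
  refine ⟨m, ⟪e, ℓ⟫, s', hm, hem, ?_, by rw [← hdecomp, add_sub_cancel]⟩
  have hpyth : ‖⟪e, ℓ⟫ • e + s' • m‖ ^ 2 = ⟪e, ℓ⟫ ^ 2 + s' ^ 2 := by
    rw [norm_add_sq_real, inner_smul_left, inner_smul_right, hem, norm_smul, norm_smul, he,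
      show ‖m‖ = 1 from hm, Real.norm_eq_abs, Real.norm_eq_abs, mul_one, mul_one, sq_abs, sq_abs,
      mul_zero, mul_zero, mul_zero, add_zero]
  rw [← hpyth, ← hdecomp, add_sub_cancel, hℓ, one_pow]

theorem directionalIntegral_smul_le (hh : Continuous h) (hh0 : 0 ≤ h)
    (hh1 : ∀ s, 1 ≤ s → h s = 0) (hE : 3 ≤ finrank ℝ E) {e ℓ : E} (he : ‖e‖ = 1)
    (hℓ : ‖ℓ‖ = 1) {ρ : ℝ} (hρ : |ρ| < 1) :
    directionalIntegral h (ρ • e) ℓ ≤ directionalIntegral h (ρ • e) e := by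
  obtain ⟨m, s, s', hm, hem, hs, rfl⟩ :=
    exists_unit_orthogonal_decomposition (by lia : 2 ≤ finrank ℝ E) he hℓ
  have hradial := directionalIntegral_eq_lintegral_discIntegral hh hh0 hE he hm hem ρ 1 0
  rw [one_smul, zero_smul, add_zero] at hradial
  rw [hradial, directionalIntegral_eq_lintegral_discIntegral hh hh0 hE he hm hem]
  refine mul_le_mul_right (setLIntegral_mono' measurableSet_Ioi fun σ hσ =>
    mul_le_mul_right ?_ _) _
  rcases lt_or_ge σ 1 with hσ1 | hσ1
  · have hρσ : (ρ * √σ) ^ 2 < 1 := by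
      rw [mul_pow, Real.sq_sqrt (mem_Ioi.mp hσ).le]
      nlinarith [(sq_lt_one_iff_abs_lt_one ρ).mpr hρ, sq_nonneg ρ, mem_Ioi.mp hσ]
    exact mul_le_mul_right (discIntegral_le hρσ hs _ _) _
  · simp [hh1 σ hσ1]

end DirectionalIntegral

section GradientIntegral

/-- The integral over the polar angle that appears in the sharp gradient bound in dimension `N`, at
distance `ρ` from the centre of the ball. -/
noncomputable def gradientIntegral (N ρ : ℝ) : ℝ :=
  ∫ t in (-1 : ℝ)..1, |t - (N - 2) / N * ρ| * (1 - t ^ 2) ^ ((N - 3) / 2) /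
    (1 - 2 * t * ρ + ρ ^ 2) ^ ((N - 2) / 2)

variable {N ρ t : ℝ}

lemma sq_one_sub_abs_le (ht : t ∈ Icc (-1) 1) (ρ : ℝ) :
    (1 - |ρ|) ^ 2 ≤ 1 - 2 * t * ρ + ρ ^ 2 := by
  have htρ : t * ρ ≤ |ρ| := (le_abs_self _).trans (by
    rw [abs_mul]; exact mul_le_of_le_one_left (abs_nonneg ρ) (abs_le.mpr ht))
  nlinarith [sq_abs ρ]

lemma continuousOn_gradientIntegral (hN : 3 ≤ N) :
    ContinuousOn (gradientIntegral N) (Ioo (-1) 1) := by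
  rw [continuousOn_iff_continuous_domRestrict]
  have hrestrict : (Ioo (-1 : ℝ) 1).domRestrict (gradientIntegral N) = fun ρ : Ioo (-1 : ℝ) 1 =>
      ∫ t in (-1 : ℝ)..1, |t - (N - 2) / N * ρ| * (1 - t ^ 2) ^ ((N - 3) / 2) /
        max (1 - 2 * t * ρ + ρ ^ 2) ((1 - |(ρ : ℝ)|) ^ 2) ^ ((N - 2) / 2) := by
    ext ρ
    refine intervalIntegral.integral_congr fun t ht => ?_
    rw [uIcc_of_le (by norm_num)] at ht
    rw [max_eq_left (sq_one_sub_abs_le ht ρ)]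
  have hpos (q : Ioo (-1 : ℝ) 1 × ℝ) :
      0 < max (1 - 2 * q.2 * q.1 + (q.1 : ℝ) ^ 2) ((1 - |(q.1 : ℝ)|) ^ 2) :=
    lt_max_of_lt_right (pow_pos (sub_pos.mpr (abs_lt.mpr q.1.2)) 2)
  rw [hrestrict]
  refine intervalIntegral.continuous_parametric_intervalIntegral_of_continuous' ?_ _ _
  refine Continuous.div (.mul (by fun_prop) (.rpow_const (by fun_prop) fun q => .inr ?_))
    (.rpow_const (by fun_prop) fun q => .inr ?_) fun q => (Real.rpow_pos_of_pos (hpos q) _).ne'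
  all_goals linarith

lemma gradientIntegral_nonneg (N ρ : ℝ) : 0 ≤ gradientIntegral N ρ := by
  refine intervalIntegral.integral_nonneg (by norm_num) fun t ht => ?_
  have hden := (sq_nonneg _).trans (sq_one_sub_abs_le ht ρ)
  have hnum : 0 ≤ 1 - t ^ 2 := by nlinarith [ht.1, ht.2]
  positivity

lemma lintegral_eq_ofReal_gradientIntegral (hN : 3 ≤ N) (hρ : |ρ| < 1) :
    ∫⁻ t in {t | t ^ 2 < 1}, ENNReal.ofReal ((1 - t ^ 2) ^ ((N - 3) / 2)) *
        ENNReal.ofReal (|t - (N - 2) / N * ρ| * (1 + ρ ^ 2 - 2 * ρ * t) ^ ((2 - N) / 2)) =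
      ENNReal.ofReal (gradientIntegral N ρ) := by
  have hden {t : ℝ} (ht : t ∈ Icc (-1) 1) : 0 < 1 - 2 * t * ρ + ρ ^ 2 :=
    (pow_pos (sub_pos.mpr hρ) 2).trans_le (sq_one_sub_abs_le ht ρ)
  have hnum {t : ℝ} (ht : t ∈ Icc (-1) 1) : 0 ≤ 1 - t ^ 2 := by nlinarith [ht.1, ht.2]
  have hset : {t : ℝ | t ^ 2 < 1} = Ioo (-1) 1 := by
    ext t
    rw [mem_ofPred_eq, sq_lt_one_iff_abs_lt_one, abs_lt, mem_Ioo]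
  rw [gradientIntegral, hset, ← lintegral_ofReal_Ioo_eq_intervalIntegral (by norm_num)]
  · refine setLIntegral_congr_fun measurableSet_Ioo fun t ht => ?_
    have hd := hden (Ioo_subset_Icc_self ht)
    have hn := hnum (Ioo_subset_Icc_self ht)
    rw [← ENNReal.ofReal_mul (by positivity), show 1 + ρ ^ 2 - 2 * ρ * t = 1 - 2 * t * ρ + ρ ^ 2 by
      ring, show (2 - N) / 2 = -((N - 2) / 2) by ring, Real.rpow_neg hd.le]
    congr 1
    ring
  · refine ContinuousOn.intervalIntegrable_of_Icc (by norm_num) (.div (.mul (by fun_prop)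
      (.rpow_const (by fun_prop) fun t _ => .inr ?_)) (.rpow_const (by fun_prop) fun t _ =>
        .inr ?_) fun t ht => (Real.rpow_pos_of_pos (hden ht) _).ne')
    all_goals linarith
  · intro t ht
    have hd := hden (Ioo_subset_Icc_self ht)
    have hn := hnum (Ioo_subset_Icc_self ht)
    positivity

lemma lintegral_slice_eq_ofReal_gradientIntegral {σ a : ℝ} (hN : 3 ≤ N) (hρ : |ρ| < 1)
    (hσ : σ ∈ Icc 0 1) (ha : 0 ≤ a) :
    ∫⁻ t in {t | t ^ 2 < 1}, ENNReal.ofReal ((1 - t ^ 2) ^ ((N - 3) / 2)) *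
        ENNReal.ofReal (a * |N * (√σ * t) - (N - 2) * ρ * σ| *
          (1 - 2 * (ρ * (√σ * t)) + ρ ^ 2 * σ) ^ ((2 - N) / 2)) =
      ENNReal.ofReal (a * N * √σ * gradientIntegral N (ρ * √σ)) := by
  have hN0 : 0 < N := by linarith
  have hρσ : |ρ * √σ| < 1 := by
    rw [abs_mul, abs_of_nonneg (Real.sqrt_nonneg σ)]
    exact mul_lt_one_of_nonneg_of_lt_one_left (abs_nonneg ρ) hρ (Real.sqrt_le_one.mpr hσ.2)
  have hweight : 0 ≤ a * N * √σ := by positivity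
  rw [ENNReal.ofReal_mul hweight, ← lintegral_eq_ofReal_gradientIntegral hN hρσ,
    ← lintegral_const_mul' _ _ ENNReal.ofReal_ne_top]
  refine lintegral_congr fun t => ?_
  have hslice := directionalIntegrand_slice (z₁ := t) (z₂ := 0) (ρ := ρ) hN0 hσ.1 a 1 0
  simp only [one_mul, zero_mul, add_zero, mul_one] at hslice
  rw [hslice, ENNReal.ofReal_mul hweight]
  ring

variable {E : Type*} [NormedAddCommGroup E] [InnerProductSpace ℝ E] [FiniteDimensional ℝ E]
  [MeasurableSpace E] [BorelSpace E] {h : ℝ → ℝ}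

lemma directionalIntegral_smul_self (hh : Continuous h) (hh0 : 0 ≤ h)
    (hh1 : ∀ s, 1 ≤ s → h s = 0) (hE : 3 ≤ finrank ℝ E) {e : E} (he : ‖e‖ = 1) (hρ : |ρ| < 1) :
    directionalIntegral h (ρ • e) e =
      (volume : Measure (EuclideanSpace ℝ (Fin (finrank ℝ E - 1)))).toSphere univ *
        ∫⁻ σ in Ioi 0, ENNReal.ofReal (σ ^ ((finrank ℝ E - 2 : ℝ) / 2) / 2 *
          (h σ * finrank ℝ E * √σ * gradientIntegral (finrank ℝ E) (ρ * √σ))) := by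
  have hN : (3 : ℝ) ≤ finrank ℝ E := by exact_mod_cast hE
  let G : ℝ × ℝ → ENNReal := fun q => ENNReal.ofReal (h q.2 *
    |finrank ℝ E * q.1 - (finrank ℝ E - 2) * ρ * q.2| *
      (1 - 2 * (ρ * q.1) + ρ ^ 2 * q.2) ^ ((2 - finrank ℝ E : ℝ) / 2))
  have hG : Measurable G := by
    have := hh.measurable
    fun_prop
  have hcoord : directionalIntegral h (ρ • e) e = ∫⁻ y : E, G (⟪e, y⟫, ‖y‖ ^ 2) := by
    refine lintegral_congr fun y => ?_
    simp only [G, inner_smul_left, inner_smul_right, norm_smul, he,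
      real_inner_self_eq_norm_sq, real_inner_comm y, Real.norm_eq_abs, sq_abs,
      RCLike.conj_to_real, one_pow, mul_one]
  rw [hcoord, lintegral_inner_norm_sq_eq_of_norm_eq_one (k := finrank ℝ E - 1) (by lia) (by lia)
    he hG]
  congr 1
  refine setLIntegral_congr_fun measurableSet_Ioi fun σ hσ => ?_
  have hσ0 : 0 ≤ σ := (mem_Ioi.mp hσ).le
  rw [ENNReal.ofReal_mul (by positivity)]
  congr 1
  rcases le_total σ 1 with hσ1 | hσ1
  · exact lintegral_slice_eq_ofReal_gradientIntegral hN hρ ⟨hσ0, hσ1⟩ (hh0 σ)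
  · simp [G, hh1 σ hσ1]

end GradientIntegral

section Concentration

lemma exists_continuous_integrable_support_eq_Ioo {a b : ℝ} (hab : a < b) :
    ∃ ϑ : ℝ → ℝ, Continuous ϑ ∧ 0 ≤ ϑ ∧ Integrable ϑ ∧ Function.support ϑ = Ioo a b := by
  let ϑ : ContDiffBump ((a + b) / 2) :=
    ⟨(b - a) / 4, (b - a) / 2, by linarith, by linarith⟩
  refine ⟨ϑ, ϑ.continuous, ϑ.nonneg', ϑ.integrable, ?_⟩
  rw [ϑ.support_eq, Real.ball_eq_Ioo]
  congr 1 <;> simp only [ϑ] <;> ring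

lemma lintegral_ofReal_mul_le_of_support_subset {α : Type*} [MeasurableSpace α] {μ : Measure α}
    {s : Set α} {F G ϑ : α → ℝ} (hϑ : 0 ≤ ϑ) (hs : Function.support ϑ ⊆ s)
    (hFG : ∀ a ∈ s, F a ≤ G a) :
    ∫⁻ a, ENNReal.ofReal (F a * ϑ a) ∂μ ≤ ∫⁻ a, ENNReal.ofReal (G a * ϑ a) ∂μ := by
  refine lintegral_mono fun a => ENNReal.ofReal_le_ofReal ?_
  by_cases ha : a ∈ s
  · exact mul_le_mul_of_nonneg_right (hFG a ha) (hϑ a)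
  · simp [Function.notMem_support.mp fun h => ha (hs h)]

lemma le_of_forall_setLIntegral_mul_le {A B : ℝ → ℝ} (hA : ContinuousAt A 1)
    (hB : ContinuousAt B 1) (hB1 : 0 ≤ B 1)
    (hle : ∀ β < 1, ∀ ϑ : ℝ → ℝ, Continuous ϑ → 0 ≤ ϑ → (∀ s, β ≤ s → ϑ s = 0) →
      ∫⁻ σ in Ioi 0, ENNReal.ofReal (A σ * ϑ σ) ≤ ∫⁻ σ in Ioi 0, ENNReal.ofReal (B σ * ϑ σ)) :
    A 1 ≤ B 1 := by
  by_contra! hlt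
  obtain ⟨C, hBC, hCA⟩ := exists_between hlt
  obtain ⟨D, hCD, hDA⟩ := exists_between hCA
  have hC : 0 ≤ C := hB1.trans hBC.le
  have hnear : ∀ᶠ σ in 𝓝[<] (1 : ℝ), 0 < σ ∧ B σ < C ∧ D < A σ :=
    nhdsWithin_le_nhds ((lt_mem_nhds zero_lt_one).and
      ((hB.eventually_lt_const hBC).and (hA.eventually_const_lt hDA)))
  obtain ⟨a, ha1, ha⟩ := mem_nhdsLT_iff_exists_Ioo_subset.mp hnear
  obtain ⟨β, haβ, hβ1⟩ := exists_between (mem_Iio.mp ha1)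
  obtain ⟨ϑ, hϑ, hϑ0, hϑint, hϑsupp⟩ := exists_continuous_integrable_support_eq_Ioo haβ
  have hzero : ∀ s, β ≤ s → ϑ s = 0 := fun s hs =>
    Function.notMem_support.mp fun h => hs.not_gt (hϑsupp ▸ h).2
  have hIoo {σ : ℝ} (hσ : σ ∈ Ioo a β) : 0 < σ ∧ B σ < C ∧ D < A σ :=
    ha ⟨hσ.1, hσ.2.trans hβ1⟩
  have hDC : ∫⁻ σ in Ioi 0, ENNReal.ofReal (D * ϑ σ) ≤ ∫⁻ σ in Ioi 0, ENNReal.ofReal (C * ϑ σ) :=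
    (lintegral_ofReal_mul_le_of_support_subset hϑ0 hϑsupp.subset
      fun σ hσ => (hIoo hσ).2.2.le).trans <| (hle β hβ1 ϑ hϑ hϑ0 hzero).trans <|
        lintegral_ofReal_mul_le_of_support_subset hϑ0 hϑsupp.subset
          fun σ hσ => (hIoo hσ).2.1.le
  have hpos : 0 < ∫⁻ σ in Ioi 0, ENNReal.ofReal (ϑ σ) := by
    rw [setLIntegral_pos_iff (by fun_prop)]
    refine ((Measure.measure_Ioo_pos _).mpr haβ).trans_le
      (measure_mono fun σ hσ => ⟨?_, (hIoo hσ).1⟩)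
    rw [← hϑsupp] at hσ
    exact (ENNReal.ofReal_pos.mpr ((hϑ0 σ).lt_of_ne' hσ)).ne'
  simp only [ENNReal.ofReal_mul (hC.trans hCD.le), ENNReal.ofReal_mul hC,
    lintegral_const_mul' _ _ ENNReal.ofReal_ne_top] at hDC
  rw [ENNReal.mul_le_mul_iff_left hpos.ne' hϑint.restrict.lintegral_lt_top.ne,
    ENNReal.ofReal_le_ofReal_iff hC] at hDC
  exact hCD.not_ge hDC

end Concentration

section SphereConstant

/-- The constant `c_N` of the sharp gradient bound in dimension `N`. -/
noncomputable def gradientConstant (N : ℝ) : ℝ :=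
  2 * Real.Gamma ((N + 2) / 2) / (Real.Gamma (1 / 2) * Real.Gamma ((N - 1) / 2))

variable {E : Type*} [NormedAddCommGroup E] [InnerProductSpace ℝ E] [FiniteDimensional ℝ E]
  [MeasurableSpace E] [BorelSpace E]

lemma toSphere_volume_real_univ [Nontrivial E] :
    (volume : Measure E).toSphere.real univ =
      2 * √Real.pi ^ finrank ℝ E / Real.Gamma (finrank ℝ E / 2) := by
  have hd : (0 : ℝ) < finrank ℝ E := by exact_mod_cast finrank_pos
  have := Real.Gamma_pos_of_pos (half_pos hd)
  rw [Measure.toSphere_real_apply_univ, measureReal_def, InnerProductSpace.volume_ball,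
    Real.Gamma_add_one (half_pos hd).ne', ENNReal.ofReal_one, one_pow, one_mul,
    ENNReal.toReal_ofReal (by positivity)]
  field_simp

lemma gradientConstant_mul_toSphere_volume (hE : 2 ≤ finrank ℝ E) :
    gradientConstant (finrank ℝ E) * (volume : Measure E).toSphere.real univ =
      finrank ℝ E *
        (volume : Measure (EuclideanSpace ℝ (Fin (finrank ℝ E - 1)))).toSphere.real univ := by
  have : Nontrivial E := finrank_pos_iff (R := ℝ).mp (by lia)
  have : Nonempty (Fin (finrank ℝ E - 1)) := ⟨⟨0, by lia⟩⟩
  have hN : (2 : ℝ) ≤ finrank ℝ E := by exact_mod_cast hE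
  have := Real.Gamma_pos_of_pos (by linarith : (0 : ℝ) < finrank ℝ E / 2)
  have hΓ := Real.Gamma_pos_of_pos (by linarith : (0 : ℝ) < (finrank ℝ E - 1) / 2)
  have hpow : √Real.pi ^ finrank ℝ E = √Real.pi ^ (finrank ℝ E - 1) * √Real.pi := by
    rw [← pow_succ, Nat.sub_add_cancel (by lia)]
  rw [gradientConstant, toSphere_volume_real_univ, toSphere_volume_real_univ,
    finrank_euclideanSpace_fin, Nat.cast_pred (by lia), hpow, Real.Gamma_one_half_eq,
    show ((finrank ℝ E : ℝ) + 2) / 2 = finrank ℝ E / 2 + 1 by ring,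
    Real.Gamma_add_one (by linarith)]
  field_simp

end SphereConstant

section UnitBound

variable {E : Type*} [NormedAddCommGroup E] [InnerProductSpace ℝ E] [FiniteDimensional ℝ E]
  [MeasurableSpace E] [BorelSpace E]

lemma ofReal_abs_mul_lintegral_le_directionalIntegral [Nontrivial E] {g : E → ℝ} {h : ℝ → ℝ}
    {β : ℝ} {x : E} (hg : HarmonicOnNhd g (Metric.ball 0 1))
    (hbound : ∀ y ∈ Metric.ball (0 : E) 1,
      ‖g y‖ ≤ (1 - 2 * ⟪x, y⟫ + ‖x‖ ^ 2 * ‖y‖ ^ 2) ^ ((2 - finrank ℝ E : ℝ) / 2))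
    (hh : Continuous h) (hh0 : 0 ≤ h) (hβ : β < 1) (hzero : ∀ s, β ≤ s → h s = 0) (ℓ : E) :
    ENNReal.ofReal |fderiv ℝ g 0 ℓ - (finrank ℝ E - 2) * ⟪x, ℓ⟫ * g 0| *
        ∫⁻ y : E, ENNReal.ofReal (h (‖y‖ ^ 2) * ‖y‖ ^ 2) ≤ directionalIntegral h x ℓ := by
  have hnonneg (y : E) : 0 ≤ h (‖y‖ ^ 2) * ‖y‖ ^ 2 := mul_nonneg (hh0 _) (sq_nonneg _)
  have hint : Integrable fun y : E => h (‖y‖ ^ 2) * ‖y‖ ^ 2 :=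
    Continuous.integrable_of_hasCompactSupport (by fun_prop) <|
      hasCompactSupport_of_forall_le_norm_sq fun y hy => by rw [hzero _ hy, zero_mul]
  rw [← ofReal_integral_eq_lintegral_ofReal hint (ae_of_all _ hnonneg),
    ← ENNReal.ofReal_mul (abs_nonneg _), ← abs_of_nonneg (integral_nonneg hnonneg), ← abs_mul,
    fderiv_sub_mul_integral_radial_of_harmonicOnNhd hg hh hβ hzero, ← Real.norm_eq_abs, ofReal_norm]
  refine (enorm_integral_le_lintegral_enorm _).trans (lintegral_mono fun y => ?_)
  rw [← ofReal_norm, norm_mul, norm_mul, Real.norm_of_nonneg (hh0 _), Real.norm_eq_abs (_ - _)]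
  refine ENNReal.ofReal_le_ofReal ?_
  by_cases hy : y ∈ Metric.ball (0 : E) 1
  · exact mul_le_mul_of_nonneg_left (hbound y hy) (mul_nonneg (hh0 _) (abs_nonneg _))
  · have hy1 : 1 ≤ ‖y‖ := by simpa using hy
    simp [hzero (‖y‖ ^ 2) (hβ.le.trans (one_le_pow₀ hy1))]

lemma setLIntegral_ofReal_abs_mul_le {g : E → ℝ} {h : ℝ → ℝ} {β : ℝ} {x ℓ : E}
    (hE : 3 ≤ finrank ℝ E) (hg : HarmonicOnNhd g (Metric.ball 0 1))
    (hbound : ∀ y ∈ Metric.ball (0 : E) 1,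
      ‖g y‖ ≤ (1 - 2 * ⟪x, y⟫ + ‖x‖ ^ 2 * ‖y‖ ^ 2) ^ ((2 - finrank ℝ E : ℝ) / 2))
    (hx : ‖x‖ < 1) (hℓ : ‖ℓ‖ = 1)
    (hh : Continuous h) (hh0 : 0 ≤ h) (hβ : β < 1) (hzero : ∀ s, β ≤ s → h s = 0) :
    ∫⁻ σ in Ioi 0, ENNReal.ofReal
        (|fderiv ℝ g 0 ℓ - (finrank ℝ E - 2) * ⟪x, ℓ⟫ * g 0| *
          (volume : Measure E).toSphere.real univ *
          (σ ^ ((finrank ℝ E - 2 : ℝ) / 2) / 2 * σ) * h σ) ≤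
      ∫⁻ σ in Ioi 0, ENNReal.ofReal
        ((volume : Measure (EuclideanSpace ℝ (Fin (finrank ℝ E - 1)))).toSphere.real univ *
          (σ ^ ((finrank ℝ E - 2 : ℝ) / 2) / 2 *
            (finrank ℝ E * √σ * gradientIntegral (finrank ℝ E) (‖x‖ * √σ))) * h σ) := by
  have : Nontrivial E := finrank_pos_iff (R := ℝ).mp (by lia)
  obtain ⟨e, he, hxe⟩ := exists_norm_eq_one_eq_smul x
  have hρ : |‖x‖| < 1 := by rwa [abs_norm]
  have hh1 : ∀ s, 1 ≤ s → h s = 0 := fun s hs => hzero s (hβ.le.trans hs)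
  have hle := (ofReal_abs_mul_lintegral_le_directionalIntegral hg hbound hh hh0 hβ hzero ℓ).trans <|
    (congrArg (directionalIntegral h · ℓ) hxe).trans_le <|
      directionalIntegral_smul_le hh hh0 hh1 hE he hℓ hρ
  rw [directionalIntegral_smul_self hh hh0 hh1 hE he hρ,
    lintegral_fun_norm_sq volume (f := fun s => ENNReal.ofReal (h s * s)) (by fun_prop),
    ← mul_assoc, ← ofReal_measureReal, ← ofReal_measureReal, ← ENNReal.ofReal_mul (abs_nonneg _),
    ← lintegral_const_mul' _ _ ENNReal.ofReal_ne_top,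
    ← lintegral_const_mul' _ _ ENNReal.ofReal_ne_top] at hle
  refine Eq.trans_le ?_ (hle.trans_eq ?_)
  · refine setLIntegral_congr_fun measurableSet_Ioi fun σ (hσ : 0 < σ) => ?_
    rw [← ENNReal.ofReal_mul (by positivity), ← ENNReal.ofReal_mul (by positivity)]
    ring_nf
  · refine lintegral_congr fun σ => ?_
    rw [← ENNReal.ofReal_mul measureReal_nonneg]
    ring_nf

lemma abs_fderiv_sub_mul_le {g : E → ℝ} {x ℓ : E} (hE : 3 ≤ finrank ℝ E)
    (hg : HarmonicOnNhd g (Metric.ball 0 1))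
    (hbound : ∀ y ∈ Metric.ball (0 : E) 1,
      ‖g y‖ ≤ (1 - 2 * ⟪x, y⟫ + ‖x‖ ^ 2 * ‖y‖ ^ 2) ^ ((2 - finrank ℝ E : ℝ) / 2))
    (hx : ‖x‖ < 1) (hℓ : ‖ℓ‖ = 1) :
    |fderiv ℝ g 0 ℓ - (finrank ℝ E - 2) * ⟪x, ℓ⟫ * g 0| ≤
      gradientConstant (finrank ℝ E) * gradientIntegral (finrank ℝ E) ‖x‖ := by
  have : Nontrivial E := finrank_pos_iff (R := ℝ).mp (by lia)
  have hN : (3 : ℝ) ≤ finrank ℝ E := by exact_mod_cast hE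
  have hpow : ContinuousAt (fun σ : ℝ => σ ^ ((finrank ℝ E - 2 : ℝ) / 2)) 1 :=
    Real.continuousAt_rpow_const _ _ (.inl one_ne_zero)
  have hgrad : ContinuousAt (fun σ : ℝ => gradientIntegral (finrank ℝ E) (‖x‖ * √σ)) 1 := by
    refine ContinuousAt.comp (g := gradientIntegral (finrank ℝ E)) ?_ (by fun_prop)
    rw [Real.sqrt_one, mul_one]
    exact (continuousOn_gradientIntegral hN).continuousAt
      (Ioo_mem_nhds (neg_one_lt_zero.trans_le (norm_nonneg x)) hx)
  have hsphere : 0 < (volume : Measure E).toSphere.real univ := by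
    rw [toSphere_volume_real_univ]
    have := Real.Gamma_pos_of_pos (by linarith : (0 : ℝ) < finrank ℝ E / 2)
    positivity
  have hlimit := le_of_forall_setLIntegral_mul_le (by fun_prop) (by fun_prop)
    (by have := gradientIntegral_nonneg (finrank ℝ E) (‖x‖ * √1); positivity)
    fun β hβ ϑ hϑ hϑ0 hzero =>
      setLIntegral_ofReal_abs_mul_le hE hg hbound hx hℓ hϑ hϑ0 hβ hzero
  simp only [Real.one_rpow, Real.sqrt_one, mul_one] at hlimit
  refine le_of_mul_le_mul_right ?_ hsphere
  rw [mul_right_comm (gradientConstant _), gradientConstant_mul_toSphere_volume (by lia)]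
  linarith

end UnitBound

section NormGradient

section Limsup

variable {E F : Type*} [NormedAddCommGroup E] [NormedSpace ℝ E] [NormedAddCommGroup F]
  [NormedSpace ℝ F]

lemma limsup_abs_norm_sub_norm_div_le [Nontrivial E] {u : E → F} {x : E}
    (hu : DifferentiableAt ℝ u x) :
    limsup (fun y => |‖u y‖ - ‖u x‖| / ‖y - x‖) (𝓝[≠] x) ≤ ‖fderiv ℝ u x‖ := by
  have : (𝓝[≠] x).NeBot := Module.punctured_nhds_neBot ℝ E x
  refine le_of_forall_pos_le_add fun ε hε => limsup_le_of_le
    (IsBoundedUnder.isCoboundedUnder_le (isBoundedUnder_of ⟨0, fun y => by positivity⟩)) ?_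
  filter_upwards [self_mem_nhdsWithin,
    nhdsWithin_le_nhds (hu.hasFDerivAt.isLittleO.def hε)] with y hyx hy
  rw [div_le_iff₀ (norm_sub_pos_iff.mpr hyx)]
  calc |‖u y‖ - ‖u x‖|
      ≤ ‖u y - u x‖ := abs_norm_sub_norm_le _ _
    _ ≤ ‖fderiv ℝ u x (y - x)‖ + ‖u y - u x - fderiv ℝ u x (y - x)‖ := norm_le_insert' _ _
    _ ≤ ‖fderiv ℝ u x‖ * ‖y - x‖ + ε * ‖y - x‖ := add_le_add (ContinuousLinearMap.le_opNorm _ _) hy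
    _ = (‖fderiv ℝ u x‖ + ε) * ‖y - x‖ := by ring

end Limsup

variable {E F : Type*} [NormedAddCommGroup E] [InnerProductSpace ℝ E] [FiniteDimensional ℝ E]
  [NormedAddCommGroup F] [NormedSpace ℝ F]

lemma norm_fderiv_le_of_harmonicOnNhd_real {v : E → ℝ} {x : E} (hE : 3 ≤ finrank ℝ E)
    (hv : HarmonicOnNhd v (Metric.ball 0 1)) (hbound : ∀ y ∈ Metric.ball (0 : E) 1, ‖v y‖ ≤ 1)
    (hx : ‖x‖ < 1) :
    ‖fderiv ℝ v x‖ ≤ gradientConstant (finrank ℝ E) / (1 - ‖x‖ ^ 2) *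
      gradientIntegral (finrank ℝ E) ‖x‖ := by
  borelize E
  have : Nontrivial E := finrank_pos_iff (R := ℝ).mp (by lia)
  obtain ⟨g, L, hg, hgbound, hfderiv⟩ := exists_harmonicOnNhd_ball_fderiv_eq hx hv hbound
  have hpos : 0 < 1 - ‖x‖ ^ 2 := by nlinarith [norm_nonneg x]
  have hunit (ℓ : E) (hℓ : ‖ℓ‖ = 1) : ‖fderiv ℝ v x ℓ‖ ≤
      gradientConstant (finrank ℝ E) / (1 - ‖x‖ ^ 2) * gradientIntegral (finrank ℝ E) ‖x‖ := by
    have hker := abs_fderiv_sub_mul_le hE hg hgbound hx ((L.symm.norm_map ℓ).trans hℓ)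
    rw [← smul_eq_mul (_ * _) (g 0), ← hfderiv, L.apply_symm_apply, smul_eq_mul, abs_mul,
      abs_of_pos hpos] at hker
    rwa [div_mul_eq_mul_div, le_div_iff₀' hpos]
  obtain ⟨ℓ, hℓ⟩ := exists_norm_eq E zero_le_one
  exact ContinuousLinearMap.opNorm_le_of_unit_norm ((norm_nonneg _).trans (hunit ℓ hℓ)) hunit

lemma norm_fderiv_le_of_harmonicOnNhd {u : E → F} {x : E} (hE : 3 ≤ finrank ℝ E)
    (hu : HarmonicOnNhd u (Metric.ball 0 1)) (hbound : ∀ y ∈ Metric.ball (0 : E) 1, ‖u y‖ ≤ 1)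
    (hx : ‖x‖ < 1) :
    ‖fderiv ℝ u x‖ ≤ gradientConstant (finrank ℝ E) / (1 - ‖x‖ ^ 2) *
      gradientIntegral (finrank ℝ E) ‖x‖ := by
  have hdiff : DifferentiableAt ℝ u x :=
    (hu x (mem_ball_zero_iff.mpr hx)).1.differentiableAt two_ne_zero
  have hdual (f : F →L[ℝ] ℝ) (hf : ‖f‖ ≤ 1) : ‖f ∘L fderiv ℝ u x‖ ≤
      gradientConstant (finrank ℝ E) / (1 - ‖x‖ ^ 2) * gradientIntegral (finrank ℝ E) ‖x‖ := by
    rw [← f.fderiv, ← fderiv_comp x f.differentiableAt hdiff]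
    exact norm_fderiv_le_of_harmonicOnNhd_real hE (fun y hy => (hu y hy).comp_CLM f)
      (fun y hy => (f.le_opNorm _).trans (mul_le_one₀ hf (norm_nonneg _) (hbound y hy))) hx
  refine ContinuousLinearMap.opNorm_le_bound _ ((norm_nonneg _).trans (hdual 0 (by simp)))
    fun w => ?_
  obtain ⟨f, hf, hfw⟩ := exists_dual_vector'' ℝ (fderiv ℝ u x w)
  calc ‖fderiv ℝ u x w‖ = ‖(f ∘L fderiv ℝ u x) w‖ := by
        rw [ContinuousLinearMap.comp_apply, hfw, RCLike.ofReal_real_eq_id, id, norm_norm]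
    _ ≤ ‖f ∘L fderiv ℝ u x‖ * ‖w‖ := ContinuousLinearMap.le_opNorm _ _
    _ ≤ _ := mul_le_mul_of_nonneg_right (hdual f hf) (norm_nonneg w)

end NormGradient

lemma harmonicAt_pi {ι E : Type*} [Fintype ι] [NormedAddCommGroup E] [InnerProductSpace ℝ E]
    [FiniteDimensional ℝ E] {u : E → ι → ℝ} {x : E} (hu : ∀ j, HarmonicAt (fun y => u y j) x) :
    HarmonicAt u x := by
  have hu2 : ContDiffAt ℝ 2 u x := contDiffAt_pi.mpr fun j => (hu j).1
  refine ⟨hu2, ?_⟩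
  filter_upwards [hu2.eventually (by simp), eventually_all.mpr fun j => (hu j).2] with y hy hΔ
  funext j
  exact (hy.laplacian_CLM_comp_left (l := .proj (R := ℝ) (φ := fun _ => ℝ) j)).symm.trans (hΔ j)

lemma HarmonicOnUnitBall.harmonicOnNhd {n : ℕ} {v : EuclideanSpace ℝ (Fin n) → ℝ}
    (hv : HarmonicOnUnitBall v) : HarmonicOnNhd v (Metric.ball 0 1) := by
  have hv2 : ∀ y ∈ Metric.ball 0 1, ContDiffAt ℝ 2 v y :=
    fun y hy => hv.1.contDiffAt (Metric.isOpen_ball.mem_nhds hy)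
  refine fun y hy => ⟨hv2 y hy, ?_⟩
  filter_upwards [Metric.isOpen_ball.mem_nhds hy] with z hz
  have hdiff : DifferentiableAt ℝ (fderiv ℝ v) z :=
    ((hv2 z hz).fderiv_right (m := 1) le_rfl).differentiableAt one_ne_zero
  rw [laplacian_eq_sum_fderiv_fderiv (EuclideanSpace.basisFun (Fin n) ℝ), Pi.zero_apply,
    ← hv.2 z hz]
  refine Finset.sum_congr rfl fun i _ => ?_
  rw [fderiv_clm_apply hdiff (differentiableAt_const _)]
  simp

lemma harmonicOnNhd_toLp {n ν : ℕ} {q : ENNReal} [Fact (1 ≤ q)]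
    {u : EuclideanSpace ℝ (Fin n) → Fin ν → ℝ} (hu : ∀ j, HarmonicOnUnitBall (fun x => u x j)) :
    HarmonicOnNhd (fun x => WithLp.toLp q (u x)) (Metric.ball 0 1) :=
  (harmonicOnNhd_comp_CLE_iff (PiLp.continuousLinearEquiv q ℝ _).symm).mpr
    fun x hx => harmonicAt_pi fun j => (hu j).harmonicOnNhd x hx

lemma pnormR_eq_norm_toLp {ν : ℕ} {p : ℝ} (hp : 0 < p) (w : Fin ν → ℝ) :
    pnormR p w = ‖WithLp.toLp (ENNReal.ofReal p) w‖ := by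
  have htoReal : (ENNReal.ofReal p).toReal = p := ENNReal.toReal_ofReal hp.le
  rw [PiLp.norm_eq_sum (htoReal.symm ▸ hp), htoReal]
  rfl

theorem stmt0_general {E F : Type*} [NormedAddCommGroup E] [InnerProductSpace ℝ E]
    [FiniteDimensional ℝ E] [NormedAddCommGroup F] [NormedSpace ℝ F] {u : E → F} {x : E}
    (hE : 3 ≤ finrank ℝ E) (hu : HarmonicOnNhd u (Metric.ball 0 1))
    (hbound : ∀ y ∈ Metric.ball (0 : E) 1, ‖u y‖ ≤ 1) (hx : ‖x‖ < 1) :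
    limsup (fun y => |‖u y‖ - ‖u x‖| / ‖y - x‖) (𝓝[≠] x) ≤
      gradientConstant (finrank ℝ E) / (1 - ‖x‖ ^ 2) * gradientIntegral (finrank ℝ E) ‖x‖ :=
  have : Nontrivial E := finrank_pos_iff (R := ℝ).mp (by lia)
  have hdiff := (hu x (mem_ball_zero_iff.mpr hx)).1.differentiableAt two_ne_zero
  (limsup_abs_norm_sub_norm_div_le hdiff).trans (norm_fderiv_le_of_harmonicOnNhd hE hu hbound hx)

theorem stmt0 (p : ℝ) (hp : 1 < p) (n : ℕ) (hn : 3 ≤ n) (ν : ℕ) (hν : 1 ≤ ν)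
    (u : EuclideanSpace ℝ (Fin n) → (Fin ν → ℝ))
    (hharm : ∀ j, HarmonicOnUnitBall (fun x => u x j))
    (hmap : ∀ x : EuclideanSpace ℝ (Fin n), ‖x‖ < 1 → pnormR p (u x) < 1)
    (x : EuclideanSpace ℝ (Fin n)) (hx : ‖x‖ < 1) :
    gradPnormR p u x ≤
      (2 * Real.Gamma (((n : ℝ) + 2) / 2) /
          (Real.Gamma (1 / 2) * Real.Gamma (((n : ℝ) - 1) / 2))) / (1 - ‖x‖ ^ 2) *
        ∫ t in (-1 : ℝ)..1,
          |t - (((n : ℝ) - 2) / n) * ‖x‖| * (1 - t ^ 2) ^ (((n : ℝ) - 3) / 2) /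
            (1 - 2 * t * ‖x‖ + ‖x‖ ^ 2) ^ (((n : ℝ) - 2) / 2) := by
  have : Fact (1 ≤ ENNReal.ofReal p) := ⟨ENNReal.one_le_ofReal.mpr hp.le⟩
  simp only [gradPnormR, pnormR_eq_norm_toLp (one_pos.trans hp)] at hmap ⊢
  simpa only [finrank_euclideanSpace_fin, gradientConstant, gradientIntegral] using
    stmt0_general (by rwa [finrank_euclideanSpace_fin]) (harmonicOnNhd_toLp hharm)
      (fun y hy => (hmap y (mem_ball_zero_iff.mp hy)).le) hx
end

section
/- Let n ≥ 1 and let ν be a positive integer. If f = (f₁,…,f_ν) : 𝔹_{ℓ_∞ⁿ} → 𝔹_{ℓ₂^ν} is a pluriharmonic function on the unit polydisc, then for every z ∈ 𝔹_{ℓ_∞ⁿ}, Σ_{j=1}^{ν} Σ_{k=1}^{n} ( |∂f_j(z)/∂z_k|² + |∂f_j(z)/∂z̄_k|² ) (1 − |z_k|²)² ≤ 1 − ‖f(z)‖₂². -/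
open scoped BigOperators

/-- The Euclidean (ℓ²) norm on `ℂ^ν`. -/
noncomputable def eNorm2 {ν : ℕ} (w : Fin ν → ℂ) : ℝ :=
  Real.sqrt (∑ j, ‖w j‖ ^ 2)

/-!
Averaged over a circle, the square norm of a Hilbert-space valued pluriharmonic function dominates
the sum of the square norms of its Fourier coefficients of order `0`, `1` and `-1` (Bessel). As the
average is at most `1`, this is a Schwarz–Pick inequality at the centre of the disc. Restricting to
complex lines through the centre of the polydisc bounds `‖L v‖` for the joint differential `L` and
every `v` in the unit polydisc, and some choice of signs `v = (±1, …, ±1)` satisfies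
`∑ k, ‖L (e k)‖² ≤ ‖L v‖²`, by the parallelogram law. A Möbius automorphism in each variable moves
the centre to an arbitrary point.

The conjugation in `f = h + conj g` enters only as a conjugate-linear isometry `J`.
-/

section SchwarzPick

open Complex ComplexConjugate Metric Real Set

section CircleAverage

variable {E F : Type*} [NormedAddCommGroup E] [InnerProductSpace ℂ E]
  [NormedAddCommGroup F] [InnerProductSpace ℂ F]
  {H : ℂ → E} {G : ℂ → F} {c : ℂ} {R : ℝ} (J : F →ₗᵢ⋆[ℂ] E)

theorem circleAverage_re {f : ℂ → ℂ} (hf : CircleIntegrable f c R) :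
    circleAverage (fun z ↦ (f z).re) c R = (circleAverage f c R).re :=
  reCLM.circleAverage_comp_comm hf

theorem circleAverage_norm_sq {f : ℂ → E} (hR : 0 ≤ R) (hf : ContinuousOn f (sphere c R)) :
    circleAverage (fun z ↦ ‖f z‖ ^ 2) c R =
      (circleAverage (fun z ↦ inner ℂ (f z) (f z)) c R).re := by
  have hff : ContinuousOn (fun z ↦ inner ℂ (f z) (f z)) (sphere c R) := hf.inner hf
  rw [← circleAverage_re (hff.circleIntegrable hR)]
  congr 1 with z
  exact (inner_self_eq_norm_sq (𝕜 := ℂ) (f z)).symm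

theorem circleAverage_norm_sq_le_of_circleAverage_inner_eq {p f : ℂ → E} (hR : 0 ≤ R)
    (hp : ContinuousOn p (sphere c R)) (hf : ContinuousOn f (sphere c R))
    (hpf : circleAverage (fun z ↦ inner ℂ (p z) (f z)) c R =
      circleAverage (fun z ↦ inner ℂ (p z) (p z)) c R) :
    circleAverage (fun z ↦ ‖p z‖ ^ 2) c R ≤ circleAverage (fun z ↦ ‖f z‖ ^ 2) c R := by
  have hinner : ContinuousOn (fun z ↦ inner ℂ (p z) (f z)) (sphere c R) := hp.inner hf
  have hre : CircleIntegrable (fun z ↦ (inner ℂ (p z) (f z)).re) c R :=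
    (continuous_re.comp_continuousOn hinner).circleIntegrable hR
  have hp_norm : CircleIntegrable (fun z ↦ ‖p z‖ ^ 2) c R := (hp.norm.pow 2).circleIntegrable hR
  have hf_norm : CircleIntegrable (fun z ↦ ‖f z‖ ^ 2) c R := (hf.norm.pow 2).circleIntegrable hR
  have young (z : ℂ) :
      (inner ℂ (p z) (f z)).re + (inner ℂ (p z) (f z)).re ≤ ‖p z‖ ^ 2 + ‖f z‖ ^ 2 := by
    have hcs : (inner ℂ (p z) (f z)).re ≤ ‖p z‖ * ‖f z‖ := re_inner_le_norm (𝕜 := ℂ) (p z) (f z)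
    linarith [two_mul_le_add_sq ‖p z‖ ‖f z‖]
  have avg_young := circleAverage_mono (hre.add hre) (hp_norm.add hf_norm) fun z _ ↦ young z
  rw [circleAverage_add hre hre, circleAverage_add hp_norm hf_norm,
    circleAverage_re (hinner.circleIntegrable hR), hpf, ← circleAverage_norm_sq hR hp] at avg_young
  exact le_of_add_le_add_left avg_young

variable [CompleteSpace E] [CompleteSpace F]

theorem circleAverage_conj_sub_smul (hR : 0 < R) (hH : DiffContOnCl ℂ H (ball c R)) :
    circleAverage (fun z ↦ conj (z - c) • H z) c R = (R : ℂ) ^ 2 • deriv H c := by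
  have conj_eq : EqOn (fun z ↦ conj (z - c) • H z)
      (fun z ↦ (R : ℂ) ^ 2 • (z - c)⁻¹ • H z) (sphere c |R|) := by
    intro z hz
    rw [abs_of_pos hR, mem_sphere_iff_norm] at hz
    have hzc : z - c ≠ 0 := norm_pos_iff.mp (hz ▸ hR)
    simp only [smul_smul, ← hz, ← conj_mul', mul_inv_cancel_right₀ hzc]
  have cauchy := hH.deriv_eq_smul_circleIntegral hR
  simp only [pow_two (_ - c), one_div, mul_inv, mul_smul (_ - c)⁻¹] at cauchy
  rw [circleAverage_congr_sphere conj_eq, circleAverage_fun_smul,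
    circleAverage_eq_circleIntegral hR.ne', cauchy, inv_smul_smul₀ two_pi_I_ne_zero]

theorem circleAverage_sub_smul (hR : 0 < R) (hH : DiffContOnCl ℂ H (ball c R)) :
    circleAverage (fun z ↦ (z - c) • H z) c R = 0 := by
  have hprod : DiffContOnCl ℂ (fun z ↦ (z - c) • H z) (ball c |R|) := by
    rw [abs_of_pos hR]
    exact (Differentiable.diffContOnCl (by fun_prop : Differentiable ℂ fun z ↦ z - c)).smul hH
  simpa using hprod.circleAverage

theorem circleAverage_comp_antilinear {f : ℂ → F} (hf : CircleIntegrable f c R) :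
    circleAverage (fun z ↦ J (f z)) c R = J (circleAverage f c R) :=
  ((J : F →+ E).toRealLinearMap J.continuous).circleAverage_comp_comm hf

theorem circleAverage_inner_right (a : E) {f : ℂ → E} (hf : CircleIntegrable f c R) :
    circleAverage (fun z ↦ inner ℂ a (f z)) c R = inner ℂ a (circleAverage f c R) :=
  ((innerSL ℂ a).restrictScalars ℝ).circleAverage_comp_comm hf

theorem circleAverage_inner_trigonometric (a b d : E) {f : ℂ → E} (hR : 0 ≤ R)
    (hf : ContinuousOn f (sphere c R)) :
    circleAverage (fun z ↦ inner ℂ (a + (z - c) • b + conj (z - c) • d) (f z)) c R =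
      inner ℂ a (circleAverage f c R) +
      inner ℂ b (circleAverage (fun z ↦ conj (z - c) • f z) c R) +
      inner ℂ d (circleAverage (fun z ↦ (z - c) • f z) c R) := by
  have hconj : ContinuousOn (fun z ↦ conj (z - c) • f z) (sphere c R) := by fun_prop
  have hid : ContinuousOn (fun z ↦ (z - c) • f z) (sphere c R) := by fun_prop
  have hinner (e : E) {k : ℂ → E} (hk : ContinuousOn k (sphere c R)) :
      CircleIntegrable (fun z ↦ inner ℂ e (k z)) c R :=
    (continuousOn_const.inner hk).circleIntegrable hR
  have hsum : CircleIntegrable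
      (fun z ↦ inner ℂ a (f z) + inner ℂ b (conj (z - c) • f z)) c R :=
    (hinner a hf).add (hinner b hconj)
  rw [← circleAverage_inner_right a (hf.circleIntegrable hR),
    ← circleAverage_inner_right b (hconj.circleIntegrable hR),
    ← circleAverage_inner_right d (hid.circleIntegrable hR),
    ← circleAverage_fun_add (hinner a hf) (hinner b hconj),
    ← circleAverage_fun_add hsum (hinner d hid)]
  congr 1 with z
  simp only [inner_add_left, inner_smul_left, inner_smul_right, conj_conj]

theorem circleAverage_add_antilinear {u : ℂ → E} {v : ℂ → F} (hR : 0 ≤ R)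
    (hu : ContinuousOn u (sphere c R)) (hv : ContinuousOn v (sphere c R)) :
    circleAverage (fun z ↦ u z + J (v z)) c R = circleAverage u c R + J (circleAverage v c R) := by
  have hJv : ContinuousOn (fun z ↦ J (v z)) (sphere c R) := J.continuous.comp_continuousOn hv
  rw [circleAverage_fun_add (hu.circleIntegrable hR) (hJv.circleIntegrable hR),
    circleAverage_comp_antilinear J (hv.circleIntegrable hR)]

theorem circleAverage_inner_pluriharmonic (hR : 0 < R)
    (hH : DiffContOnCl ℂ H (ball c R)) (hG : DiffContOnCl ℂ G (ball c R)) (a b d : E) :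
    circleAverage (fun z ↦ inner ℂ (a + (z - c) • b + conj (z - c) • d) (H z + J (G z))) c R =
      inner ℂ a (H c + J (G c)) +
      R ^ 2 * (inner ℂ b (deriv H c) + inner ℂ d (J (deriv G c))) := by
  have hHs : ContinuousOn H (sphere c R) := hH.continuousOn_ball.mono sphere_subset_closedBall
  have hGs : ContinuousOn G (sphere c R) := hG.continuousOn_ball.mono sphere_subset_closedBall
  have coeff_zero : circleAverage (fun z ↦ H z + J (G z)) c R = H c + J (G c) := by
    rw [circleAverage_add_antilinear J hR.le hHs hGs,
      DiffContOnCl.circleAverage (by rwa [abs_of_pos hR]),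
      DiffContOnCl.circleAverage (by rwa [abs_of_pos hR])]
  have coeff_one :
      circleAverage (fun z ↦ conj (z - c) • (H z + J (G z))) c R = (R : ℂ) ^ 2 • deriv H c := by
    have split := circleAverage_add_antilinear J hR.le
      (by fun_prop : ContinuousOn (fun z ↦ conj (z - c) • H z) (sphere c R))
      (by fun_prop : ContinuousOn (fun z ↦ (z - c) • G z) (sphere c R))
    rw [circleAverage_conj_sub_smul hR hH, circleAverage_sub_smul hR hG, map_zero, add_zero]
      at split
    simpa only [smul_add, map_smulₛₗ] using split
  have coeff_neg_one :
      circleAverage (fun z ↦ (z - c) • (H z + J (G z))) c R = (R : ℂ) ^ 2 • J (deriv G c) := by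
    have split := circleAverage_add_antilinear J hR.le
      (by fun_prop : ContinuousOn (fun z ↦ (z - c) • H z) (sphere c R))
      (by fun_prop : ContinuousOn (fun z ↦ conj (z - c) • G z) (sphere c R))
    rw [circleAverage_conj_sub_smul hR hG, circleAverage_sub_smul hR hH, zero_add] at split
    simpa only [smul_add, map_smulₛₗ, conj_conj, map_pow, conj_ofReal] using split
  have hf : ContinuousOn (fun z ↦ H z + J (G z)) (sphere c R) :=
    hHs.add (J.continuous.comp_continuousOn hGs)
  rw [circleAverage_inner_trigonometric a b d hR.le hf, coeff_zero, coeff_one, coeff_neg_one,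
    inner_smul_right, inner_smul_right, mul_add, add_assoc]

theorem norm_sq_add_norm_deriv_sq_le_circleAverage (hR : 0 < R)
    (hH : DiffContOnCl ℂ H (ball c R)) (hG : DiffContOnCl ℂ G (ball c R)) :
    ‖H c + J (G c)‖ ^ 2 + R ^ 2 * (‖deriv H c‖ ^ 2 + ‖deriv G c‖ ^ 2) ≤
      circleAverage (fun z ↦ ‖H z + J (G z)‖ ^ 2) c R := by
  set a := H c + J (G c)
  set b := deriv H c
  set d := deriv G c
  let p : ℂ → E := fun z ↦ a + (z - c) • b + conj (z - c) • J d
  let f : ℂ → E := fun z ↦ H z + J (G z)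
  have hp : Continuous p := by unfold p; fun_prop
  have hf : ContinuousOn f (sphere c R) :=
    (hH.continuousOn_ball.add (J.continuous.comp_continuousOn hG.continuousOn_ball)).mono
      sphere_subset_closedBall
  have avg_inner_f : circleAverage (fun z ↦ inner ℂ (p z) (f z)) c R =
      inner ℂ a a + R ^ 2 * (inner ℂ b b + inner ℂ (J d) (J d)) :=
    circleAverage_inner_pluriharmonic J hR hH hG a b (J d)
  have avg_inner_p : circleAverage (fun z ↦ inner ℂ (p z) (p z)) c R =
      inner ℂ a a + R ^ 2 * (inner ℂ b b + inner ℂ (J d) (J d)) := by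
    have h := circleAverage_inner_pluriharmonic (c := c) (H := fun z ↦ a + (z - c) • b)
      (G := fun z ↦ (z - c) • d) J hR (Differentiable.diffContOnCl (by fun_prop))
      (Differentiable.diffContOnCl (by fun_prop)) a b (J d)
    have hH' : deriv (fun z ↦ a + (z - c) • b) c = b := by simp [deriv_smul_const]
    have hG' : deriv (fun z ↦ (z - c) • d) c = d := by simp [deriv_smul_const]
    simpa only [hH', hG', map_smulₛₗ, sub_self, zero_smul, map_zero, add_zero] using h
  calc
    _ = circleAverage (fun z ↦ ‖p z‖ ^ 2) c R := by
      rw [circleAverage_norm_sq hR.le hp.continuousOn, avg_inner_p]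
      simp only [inner_self_eq_norm_sq_to_K, J.norm_map, coe_algebraMap, ← ofReal_pow,
        ← ofReal_add, ← ofReal_mul, ofReal_re]
    _ ≤ _ := circleAverage_norm_sq_le_of_circleAverage_inner_eq hR.le hp.continuousOn hf
      (avg_inner_f.trans avg_inner_p.symm)

theorem norm_sq_add_norm_deriv_sq_le {M : ℝ} (hR : 0 < R)
    (hH : DifferentiableOn ℂ H (ball c R)) (hG : DifferentiableOn ℂ G (ball c R))
    (hM : ∀ z ∈ ball c R, ‖H z + J (G z)‖ ≤ M) :
    ‖H c + J (G c)‖ ^ 2 + R ^ 2 * (‖deriv H c‖ ^ 2 + ‖deriv G c‖ ^ 2) ≤ M ^ 2 := by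
  have smaller_radius : ∀ r ∈ Ioo 0 R,
      ‖H c + J (G c)‖ ^ 2 + r ^ 2 * (‖deriv H c‖ ^ 2 + ‖deriv G c‖ ^ 2) ≤ M ^ 2 := by
    rintro r ⟨hr, hrR⟩
    have hball : closedBall c r ⊆ ball c R := closedBall_subset_ball hrR
    have hHr := hH.mono hball
    have hGr := hG.mono hball
    refine (norm_sq_add_norm_deriv_sq_le_circleAverage J hr (hHr.diffContOnCl_ball subset_rfl)
      (hGr.diffContOnCl_ball subset_rfl)).trans ?_
    refine circleAverage_mono_on_of_le_circle ?_ fun z hz ↦ ?_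
    · exact (((hHr.continuousOn.add (J.continuous.comp_continuousOn hGr.continuousOn)).norm.pow
        2).mono sphere_subset_closedBall).circleIntegrable hr.le
    · rw [abs_of_pos hr] at hz
      have := hM z (hball (sphere_subset_closedBall hz))
      gcongr
  have hcont : Continuous fun r : ℝ ↦
      ‖H c + J (G c)‖ ^ 2 + r ^ 2 * (‖deriv H c‖ ^ 2 + ‖deriv G c‖ ^ 2) := by fun_prop
  refine le_of_tendsto (hcont.continuousWithinAt (s := Iio R) (x := R)) ?_
  filter_upwards [Ioo_mem_nhdsLT hR] using smaller_radius

theorem norm_sq_add_norm_fderiv_sq_le {V : Type*} [NormedAddCommGroup V] [NormedSpace ℂ V]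
    {h : V → E} {g : V → F} {x v : V} {R M : ℝ} (hR : 0 < R) (hv : ‖v‖ ≤ 1)
    (hh : DifferentiableOn ℂ h (ball x R)) (hg : DifferentiableOn ℂ g (ball x R))
    (hM : ∀ w ∈ ball x R, ‖h w + J (g w)‖ ≤ M) :
    ‖h x + J (g x)‖ ^ 2 + R ^ 2 * (‖fderiv ℂ h x v‖ ^ 2 + ‖fderiv ℂ g x v‖ ^ 2) ≤ M ^ 2 := by
  let line : ℂ → V := fun t ↦ x + t • v
  have hline : DifferentiableOn ℂ line (ball 0 R) := by unfold line; fun_prop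
  have mapsTo_line : MapsTo line (ball 0 R) (ball x R) := by
    intro t ht
    rw [mem_ball_zero_iff] at ht
    rw [mem_ball_iff_norm, add_sub_cancel_left, norm_smul]
    exact (mul_le_of_le_one_right (norm_nonneg t) hv).trans_lt ht
  have hx : ball x R ∈ nhds x := ball_mem_nhds x hR
  have deriv_h : deriv (h ∘ line) 0 = fderiv ℂ h x v :=
    (hh.differentiableAt hx).lineDeriv_eq_fderiv
  have deriv_g : deriv (g ∘ line) 0 = fderiv ℂ g x v :=
    (hg.differentiableAt hx).lineDeriv_eq_fderiv
  have h := norm_sq_add_norm_deriv_sq_le J hR (hh.comp hline mapsTo_line)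
    (hg.comp hline mapsTo_line) fun t ht ↦ hM (line t) (mapsTo_line ht)
  simpa only [deriv_h, deriv_g, Function.comp_apply, line, zero_smul, add_zero] using h

end CircleAverage

section Signs

variable {ι E : Type*} [NormedAddCommGroup E]

theorem exists_sign_norm_sq_add_le [InnerProductSpace ℝ E] (x y : E) :
    ∃ ε : ℤˣ, ‖x‖ ^ 2 + ‖y‖ ^ 2 ≤ ‖x + ε • y‖ ^ 2 := by
  by_contra! hlt
  have hplus := hlt 1
  have hminus := hlt (-1)
  rw [one_smul] at hplus
  rw [Units.neg_smul, one_smul, ← sub_eq_add_neg] at hminus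
  linarith [parallelogram_law_with_norm ℝ x y]

theorem exists_signs_sum_norm_sq_le [InnerProductSpace ℝ E] (a : ι → E) (s : Finset ι) :
    ∃ u : ι → ℤˣ, ∑ k ∈ s, ‖a k‖ ^ 2 ≤ ‖∑ k ∈ s, u k • a k‖ ^ 2 := by
  classical
  induction s using Finset.induction_on with
  | empty => exact ⟨1, by simp⟩
  | insert i s hi ih =>
    obtain ⟨u, hu⟩ := ih
    obtain ⟨ε, hε⟩ := exists_sign_norm_sq_add_le (∑ k ∈ s, u k • a k) (a i)
    have sum_update : ∑ k ∈ s, Function.update u i ε k • a k = ∑ k ∈ s, u k • a k :=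
      Finset.sum_congr rfl fun k hk ↦ by
        rw [Function.update_of_ne (ne_of_mem_of_not_mem hk hi)]
    refine ⟨Function.update u i ε, ?_⟩
    rw [Finset.sum_insert hi, Finset.sum_insert hi, sum_update, Function.update_self,
      add_comm (‖a i‖ ^ 2), add_comm (ε • a i)]
    exact (add_le_add_left hu _).trans hε

theorem exists_norm_le_one_sum_norm_sq_le {𝕜 : Type*} [RCLike 𝕜] [InnerProductSpace 𝕜 E]
    [Fintype ι] [DecidableEq ι] (L : (ι → 𝕜) →ₗ[𝕜] E) :
    ∃ v : ι → 𝕜, ‖v‖ ≤ 1 ∧ ∑ k, ‖L (Pi.single k 1)‖ ^ 2 ≤ ‖L v‖ ^ 2 := by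
  let _ : InnerProductSpace ℝ E := .rclikeToReal 𝕜 E
  obtain ⟨u, hu⟩ := exists_signs_sum_norm_sq_le (fun k ↦ L (Pi.single k 1)) Finset.univ
  refine ⟨fun k ↦ ((u k : ℤ) : 𝕜), (pi_norm_le_iff_of_nonneg zero_le_one).mpr fun k ↦ ?_, ?_⟩
  · rcases Int.units_eq_one_or (u k) with h | h <;> simp [h]
  · rw [pi_eq_sum_univ' fun k ↦ ((u k : ℤ) : 𝕜), map_sum]
    simp only [map_smul]
    simpa only [Int.cast_smul_eq_zsmul, ← Units.smul_def] using hu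

end Signs

section Mobius

/-- The disc automorphism `w ↦ (w + a) / (1 + ā w)`, which moves the centre `0` to `a`. -/
noncomputable def diskMobius (a w : ℂ) : ℂ :=
  (w + a) / (1 + conj a * w)

theorem diskMobius_zero (a : ℂ) : diskMobius a 0 = a := by simp [diskMobius]

theorem one_add_conj_mul_ne_zero {a w : ℂ} (ha : ‖a‖ < 1) (hw : ‖w‖ < 1) :
    1 + conj a * w ≠ 0 := by
  intro h
  have hnorm : ‖conj a * w‖ = 1 := by rw [eq_neg_of_add_eq_zero_right h, norm_neg, norm_one]
  rw [norm_mul, norm_conj] at hnorm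
  exact (mul_lt_one_of_nonneg_of_lt_one_left (norm_nonneg a) ha hw.le).ne hnorm

theorem norm_one_add_conj_mul_sq_sub (a w : ℂ) :
    ‖1 + conj a * w‖ ^ 2 - ‖w + a‖ ^ 2 = (1 - ‖a‖ ^ 2) * (1 - ‖w‖ ^ 2) := by
  simp only [← normSq_eq_norm_sq, normSq_apply, add_re, add_im, mul_re, mul_im, conj_re, conj_im,
    one_re, one_im]
  ring

theorem norm_diskMobius_lt_one {a w : ℂ} (ha : ‖a‖ < 1) (hw : ‖w‖ < 1) :
    ‖diskMobius a w‖ < 1 := by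
  have hpos : 0 < (1 - ‖a‖ ^ 2) * (1 - ‖w‖ ^ 2) :=
    mul_pos (sub_pos.mpr (pow_lt_one₀ (norm_nonneg a) ha two_ne_zero))
      (sub_pos.mpr (pow_lt_one₀ (norm_nonneg w) hw two_ne_zero))
  rw [← norm_one_add_conj_mul_sq_sub, sub_pos] at hpos
  rw [diskMobius, norm_div, div_lt_one (norm_pos_iff.mpr (one_add_conj_mul_ne_zero ha hw))]
  exact lt_of_pow_lt_pow_left₀ 2 (norm_nonneg _) hpos

theorem differentiableAt_diskMobius {a w : ℂ} (ha : ‖a‖ < 1) (hw : ‖w‖ < 1) :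
    DifferentiableAt ℂ (diskMobius a) w :=
  DifferentiableAt.fun_div (by fun_prop) (by fun_prop) (one_add_conj_mul_ne_zero ha hw)

theorem hasDerivAt_diskMobius_zero (a : ℂ) :
    HasDerivAt (diskMobius a) ((1 - ‖a‖ ^ 2 : ℝ) : ℂ) 0 := by
  have hnum : HasDerivAt (fun w ↦ w + a) 1 0 := (hasDerivAt_id 0).add_const a
  have hden : HasDerivAt (fun w ↦ 1 + conj a * w) (conj a) 0 := by
    simpa using ((hasDerivAt_id (0 : ℂ)).const_mul (conj a)).const_add 1
  refine (hnum.fun_div hden (by simp)).congr_deriv ?_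
  simp [mul_conj']

variable {ι : Type*}

/-- The automorphism of the polydisc acting as `diskMobius (z k)` on the `k`-th coordinate; it
moves the centre `0` to `z`. -/
noncomputable def polydiscMobius (z w : ι → ℂ) : ι → ℂ :=
  fun k ↦ diskMobius (z k) (w k)

theorem polydiscMobius_zero (z : ι → ℂ) : polydiscMobius z 0 = z :=
  funext fun k ↦ diskMobius_zero (z k)

theorem hasFDerivAt_polydiscMobius_zero [Finite ι] (z : ι → ℂ) :
    HasFDerivAt (polydiscMobius z)
      (ContinuousLinearMap.pi fun k ↦
        ((1 - ‖z k‖ ^ 2 : ℝ) : ℂ) • (ContinuousLinearMap.proj k : (ι → ℂ) →L[ℂ] ℂ)) 0 := by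
  have := Fintype.ofFinite ι
  exact hasFDerivAt_pi.mpr fun k ↦
    (hasDerivAt_diskMobius_zero (z k)).comp_hasFDerivAt_of_eq 0 (hasFDerivAt_apply k 0) rfl

theorem fderiv_comp_polydiscMobius_single [Finite ι] [DecidableEq ι] {W : Type*}
    [NormedAddCommGroup W] [NormedSpace ℂ W] {F : (ι → ℂ) → W} {z : ι → ℂ}
    (hF : DifferentiableAt ℂ F z) (k : ι) :
    fderiv ℂ (F ∘ polydiscMobius z) 0 (Pi.single k 1) =
      (1 - ‖z k‖ ^ 2) • fderiv ℂ F z (Pi.single k 1) := by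
  have := Fintype.ofFinite ι
  have hMobius := hasFDerivAt_polydiscMobius_zero z
  have hMobius_single : fderiv ℂ (polydiscMobius z) 0 (Pi.single k 1) =
      (1 - ‖z k‖ ^ 2) • Pi.single k 1 := by
    ext i
    rcases eq_or_ne i k with rfl | hik <;> simp [hMobius.fderiv, *]
  rw [fderiv_comp 0 (by rwa [polydiscMobius_zero]) hMobius.differentiableAt,
    polydiscMobius_zero, ContinuousLinearMap.comp_apply, hMobius_single,
    ContinuousLinearMap.map_smul_of_tower]

variable [Fintype ι] {z : ι → ℂ}

theorem mapsTo_polydiscMobius (hz : z ∈ ball 0 1) :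
    MapsTo (polydiscMobius z) (ball 0 1) (ball 0 1) := by
  intro w hw
  rw [mem_ball_zero_iff, pi_norm_lt_iff one_pos] at hz hw ⊢
  exact fun k ↦ norm_diskMobius_lt_one (hz k) (hw k)

theorem differentiableOn_polydiscMobius (hz : z ∈ ball 0 1) :
    DifferentiableOn ℂ (polydiscMobius z) (ball 0 1) := by
  refine differentiableOn_pi.mpr fun k w hw ↦ DifferentiableAt.differentiableWithinAt ?_
  rw [mem_ball_zero_iff, pi_norm_lt_iff one_pos] at hz hw
  exact (differentiableAt_diskMobius (hz k) (hw k)).comp w (differentiableAt_apply k w)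

end Mobius

section Polydisc

variable {E F ι : Type*} [NormedAddCommGroup E] [InnerProductSpace ℂ E] [CompleteSpace E]
  [NormedAddCommGroup F] [InnerProductSpace ℂ F] [CompleteSpace F] [Fintype ι] [DecidableEq ι]
  (J : F →ₗᵢ⋆[ℂ] E) {h : (ι → ℂ) → E} {g : (ι → ℂ) → F}

theorem norm_sq_add_sum_norm_fderiv_single_sq_le {x : ι → ℂ} {R M : ℝ} (hR : 0 < R)
    (hh : DifferentiableOn ℂ h (ball x R)) (hg : DifferentiableOn ℂ g (ball x R))
    (hM : ∀ w ∈ ball x R, ‖h w + J (g w)‖ ≤ M) :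
    ‖h x + J (g x)‖ ^ 2 + R ^ 2 * ∑ k, (‖fderiv ℂ h x (Pi.single k 1)‖ ^ 2 +
      ‖fderiv ℂ g x (Pi.single k 1)‖ ^ 2) ≤ M ^ 2 := by
  let L : (ι → ℂ) →ₗ[ℂ] WithLp 2 (E × F) :=
    (WithLp.linearEquiv 2 ℂ (E × F)).symm ∘ₗ ((fderiv ℂ h x).prod (fderiv ℂ g x)).toLinearMap
  have norm_L (v : ι → ℂ) : ‖L v‖ ^ 2 = ‖fderiv ℂ h x v‖ ^ 2 + ‖fderiv ℂ g x v‖ ^ 2 :=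
    WithLp.prod_norm_sq_eq_of_L2 (L v)
  obtain ⟨v, hv, hsum⟩ := exists_norm_le_one_sum_norm_sq_le L
  simp only [norm_L] at hsum
  exact le_trans (by gcongr) (norm_sq_add_norm_fderiv_sq_le J hR hv hh hg hM)

theorem stmt3_general (hh : DifferentiableOn ℂ h (ball 0 1)) (hg : DifferentiableOn ℂ g (ball 0 1))
    (hM : ∀ w ∈ ball 0 1, ‖h w + J (g w)‖ ≤ 1) {z : ι → ℂ} (hz : z ∈ ball 0 1) :
    ∑ k, (‖fderiv ℂ h z (Pi.single k 1)‖ ^ 2 + ‖fderiv ℂ g z (Pi.single k 1)‖ ^ 2) *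
      (1 - ‖z k‖ ^ 2) ^ 2 ≤ 1 - ‖h z + J (g z)‖ ^ 2 := by
  have hmaps := mapsTo_polydiscMobius hz
  have hdiff := differentiableOn_polydiscMobius hz
  have hzn : ball (0 : ι → ℂ) 1 ∈ nhds z := isOpen_ball.mem_nhds hz
  have center := norm_sq_add_sum_norm_fderiv_single_sq_le J one_pos (hh.comp hdiff hmaps)
    (hg.comp hdiff hmaps) fun w hw ↦ hM _ (hmaps hw)
  simp only [fderiv_comp_polydiscMobius_single (hh.differentiableAt hzn),
    fderiv_comp_polydiscMobius_single (hg.differentiableAt hzn), Function.comp_apply,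
    polydiscMobius_zero, norm_smul, mul_pow, norm_eq_abs, sq_abs, ← mul_add, one_pow,
    one_mul] at center
  simpa only [mul_comm, le_sub_iff_add_le'] using center

end Polydisc

section EuclideanSpace

variable {V : Type*} [NormedAddCommGroup V] [NormedSpace ℂ V]

theorem differentiableOn_toLp_comp {κ : Type*} [Finite κ] {u : V → κ → ℂ} {s : Set V}
    (hu : DifferentiableOn ℂ u s) : DifferentiableOn ℂ (fun w ↦ WithLp.toLp 2 (u w)) s := by
  have := Fintype.ofFinite κ
  exact (EuclideanSpace.equiv κ ℂ).symm.comp_differentiableOn_iff.mpr hu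

variable {κ : Type*} [Fintype κ]

/-- Coordinatewise complex conjugation on `ℂ^κ`, the conjugate-linear isometry through which
`f = h + conj g` is written. -/
noncomputable def euclideanConj : EuclideanSpace ℂ κ →ₗᵢ⋆[ℂ] EuclideanSpace ℂ κ where
  toFun w := WithLp.toLp 2 fun j ↦ conj (w j)
  map_add' v w := by ext j; simp
  map_smul' a w := by ext j; simp
  norm_map' w := by simp [EuclideanSpace.norm_eq]

theorem norm_toLp_add_euclideanConj {ν : ℕ} (v w : Fin ν → ℂ) :
    ‖WithLp.toLp 2 v + euclideanConj (WithLp.toLp 2 w)‖ = eNorm2 (fun j ↦ v j + conj (w j)) :=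
  EuclideanSpace.norm_eq (WithLp.toLp 2 v + euclideanConj (WithLp.toLp 2 w))

theorem norm_fderiv_toLp_sq (u : V → κ → ℂ) (z v : V) :
    ‖fderiv ℂ (fun w ↦ WithLp.toLp 2 (u w)) z v‖ ^ 2 = ∑ j, ‖fderiv ℂ u z v j‖ ^ 2 := by
  have h : fderiv ℂ (fun w ↦ WithLp.toLp 2 (u w)) z =
      ((EuclideanSpace.equiv κ ℂ).symm : (κ → ℂ) →L[ℂ] EuclideanSpace ℂ κ) ∘L fderiv ℂ u z :=
    (EuclideanSpace.equiv κ ℂ).symm.comp_fderiv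
  rw [h, EuclideanSpace.norm_sq_eq]
  rfl

end EuclideanSpace

end SchwarzPick

theorem stmt3 (n ν : ℕ) (hn : 1 ≤ n) (hν : 1 ≤ ν)
    (f h g : (Fin n → ℂ) → (Fin ν → ℂ))
    -- the sup (ℓ^∞) norm on `Fin n → ℂ` is the Pi norm, so `Metric.ball 0 1` is the polydisc
    (hh : DifferentiableOn ℂ h (Metric.ball 0 1))
    (hg : DifferentiableOn ℂ g (Metric.ball 0 1))
    (hg0 : g 0 = 0)
    (hfd : ∀ z ∈ Metric.ball (0 : Fin n → ℂ) 1,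
      ∀ j, f z j = h z j + (starRingEnd ℂ) (g z j))
    (hmap : ∀ z ∈ Metric.ball (0 : Fin n → ℂ) 1, eNorm2 (f z) < 1)
    (z : Fin n → ℂ) (hz : z ∈ Metric.ball (0 : Fin n → ℂ) 1) :
    ∑ j, ∑ k,
        (‖fderiv ℂ h z (Pi.single k 1) j‖ ^ 2 + ‖fderiv ℂ g z (Pi.single k 1) j‖ ^ 2) *
          (1 - ‖z k‖ ^ 2) ^ 2
      ≤ 1 - eNorm2 (f z) ^ 2 := by
  have norm_f (w : Fin n → ℂ) (hw : w ∈ Metric.ball 0 1) :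
      ‖WithLp.toLp 2 (h w) + euclideanConj (WithLp.toLp 2 (g w))‖ = eNorm2 (f w) := by
    rw [norm_toLp_add_euclideanConj, funext (hfd w hw)]
  have schwarz_pick := stmt3_general euclideanConj (differentiableOn_toLp_comp hh)
    (differentiableOn_toLp_comp hg)
  specialize schwarz_pick (fun w hw ↦ (norm_f w hw).trans_le (hmap w hw).le) hz
  rw [Finset.sum_comm]
  simpa only [norm_f z hz, norm_fderiv_toLp_sq, ← Finset.sum_add_distrib, Finset.sum_mul]
    using schwarz_pick
end
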